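/- arXiv:2102.02778 — 4 statements merged into one kernel-verified Lean document; each statement's English description precedes it below -/
import Mathlib

section
/- Let H be a real Hilbert space, n ≥ 1, and P ∈ P(ⁿH) an n-homogeneous polynomial on H. Then Lip(P↾_{B_H}) = n·‖P‖_P, i.e. the best Lipschitz constant of the restriction of P to the closed unit ball of H equals n times the polynomial norm of P. Consequently, the map P ↦ P↾_{B_H} is a multiple of an isometric embedding of P(ⁿH) into Lip₀(B_H). -/
open Metric Set Real

noncomputable section

/-- The best Lipschitz constant of `f` on the set `s`. -/
def lipConstOn {α : Type*} [MetricSpace α] (f : α → ℝ) (s : Set α) : ℝ :=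
  sInf {K : ℝ | 0 ≤ K ∧ LipschitzOnWith (Real.toNNReal K) f s}

/-!
The lower bound is Euler's identity `DP(x) x = n P(x)`. For the upper bound one has to see that
`|DP(e) y| ≤ n C` for unit vectors `e`, `y` when `|P| ≤ C` on the unit ball (Banach's theorem on
polarization constants in a Hilbert space). Write `y = a e + b u` with `u ⊥ e` and `a² + b² = 1`.
Then `T(θ) = P(cos θ e + sin θ u)` is a trigonometric form of degree `n` bounded by `C`, and
`DP(e) y = n a T(0) + b T'(0)`, so the claim is the Bernstein–Szegő inequality for `T`.

With `T(θ) = exp(-i n θ) Q(exp(2 i θ))` and `deg Q ≤ n`, that inequality becomes the bound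
`|n Q(z) + (w - z) Q'(z)| ≤ n C` for the polar derivative of a polynomial with `|Q| ≤ C` on the unit
circle. At `z = 1` it follows from a quadrature formula with positive weights at the `n`-th roots
`ζ` of `w`: writing `D(ζ) = 1 + ζ + ⋯ + ζⁿ⁻¹`,
`∑ |D(ζ)|² Q(ζ) = n (n Q(1) + (w - 1) Q'(1))`. To get it, divide `Q = Q(1) + (X - 1) R`, note
`D(ζ) (ζ - 1) = w - 1`, and use that `D` is the reproducing kernel at `1` for polynomials of degree
less than `n`, by orthogonality of the characters.
-/

section Quadrature

open Polynomial ComplexConjugate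

variable {n : ℕ} {z ω : ℂ}

lemma sum_pow_mul_conj_pow (hω : IsPrimitiveRoot ω n) (hz : ‖z‖ = 1) {m l : ℕ} (hm : m < n)
    (hl : l < n) :
    ∑ j ∈ Finset.range n, (z * ω ^ j) ^ m * conj ((z * ω ^ j) ^ l)
      = if m = l then (n : ℂ) else 0 := by
  have hω_norm : ‖ω‖ = 1 := hω.norm'_eq_one (by omega)
  have hω_conj : conj ω * ω = 1 := by simp [Complex.conj_mul', hω_norm]
  split_ifs with h
  · subst h
    simp [Complex.mul_conj', hz, hω_norm, -map_mul, -map_pow]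
  · set q : ℂ := ω ^ m * conj ω ^ l with hq
    have hq_pow : q ^ n = 1 := by
      rw [hq, mul_pow, pow_right_comm, hω.pow_eq_one, pow_right_comm, ← map_pow, hω.pow_eq_one]
      simp
    have hq_ne : q ≠ 1 := fun hq_one ↦ h <| hω.pow_inj hm hl <| by
      calc ω ^ m = q * ω ^ l := by rw [hq, mul_assoc, ← mul_pow, hω_conj, one_pow, mul_one]
        _ = ω ^ l := by rw [hq_one, one_mul]
    calc ∑ j ∈ Finset.range n, (z * ω ^ j) ^ m * conj ((z * ω ^ j) ^ l)
        = ∑ j ∈ Finset.range n, z ^ m * conj z ^ l * q ^ j :=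
          Finset.sum_congr rfl fun j _ ↦ by simp only [hq, map_mul, map_pow]; ring
      _ = 0 := by rw [← Finset.mul_sum, geom_sum_eq hq_ne, hq_pow, sub_self, zero_div, mul_zero]

lemma sum_eval_mul_conj_geom_sum (hω : IsPrimitiveRoot ω n) (hz : ‖z‖ = 1) {R : ℂ[X]}
    (hR : R.natDegree < n) :
    ∑ j ∈ Finset.range n, R.eval (z * ω ^ j) * conj (∑ l ∈ Finset.range n, (z * ω ^ j) ^ l)
      = n * R.eval 1 := by
  have hmonomial : ∀ m ∈ Finset.range n, ∑ j ∈ Finset.range n,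
      (z * ω ^ j) ^ m * conj (∑ l ∈ Finset.range n, (z * ω ^ j) ^ l) = n := fun m hm ↦ by
    simp only [map_sum, Finset.mul_sum]
    rw [Finset.sum_comm, Finset.sum_congr rfl fun l hl ↦ sum_pow_mul_conj_pow hω hz
      (Finset.mem_range.1 hm) (Finset.mem_range.1 hl), Finset.sum_ite_eq, if_pos hm]
  simp only [eval_eq_sum_range' hR, one_pow, mul_one, Finset.sum_mul, mul_assoc]
  rw [Finset.sum_comm, mul_comm, Finset.sum_mul]
  refine Finset.sum_congr rfl fun m hm ↦ ?_
  rw [← Finset.mul_sum, hmonomial m hm]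

lemma sum_norm_geom_sum_sq (hω : IsPrimitiveRoot ω n) (hz : ‖z‖ = 1) :
    ∑ j ∈ Finset.range n, ‖∑ l ∈ Finset.range n, (z * ω ^ j) ^ l‖ ^ 2 = (n : ℝ) ^ 2 := by
  rcases n.eq_zero_or_pos with rfl | hn
  · simp
  have hdeg : (∑ l ∈ Finset.range n, (X : ℂ[X]) ^ l).natDegree < n :=
    (natDegree_sum_le_of_forall_le _ (n := n - 1) _ fun l hl ↦ by
      have := Finset.mem_range.1 hl; rw [natDegree_X_pow]; omega).trans_lt (by omega)
  have h := sum_eval_mul_conj_geom_sum hω hz hdeg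
  simp only [eval_finsetSum, eval_pow, eval_X, Complex.mul_conj', one_pow, Finset.sum_const,
    Finset.card_range, nsmul_eq_mul, mul_one] at h
  rw [sq (n : ℝ)]
  exact_mod_cast h

lemma sum_norm_geom_sum_sq_mul_eval (hω : IsPrimitiveRoot ω n) (hz : ‖z‖ = 1) {Q : ℂ[X]}
    (hQ : Q.natDegree ≤ n) :
    ∑ j ∈ Finset.range n, (‖∑ l ∈ Finset.range n, (z * ω ^ j) ^ l‖ : ℂ) ^ 2 * Q.eval (z * ω ^ j)
      = n * (n * Q.eval 1 + (z ^ n - 1) * Q.derivative.eval 1) := by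
  rcases n.eq_zero_or_pos with rfl | hn
  · simp
  obtain ⟨c, R, hR, rfl⟩ : ∃ (c : ℂ) (R : ℂ[X]), R.natDegree < n ∧ Q = C c + (X - C 1) * R := by
    refine ⟨Q.eval 1, Q /ₘ (X - C 1), ?_, ?_⟩
    · rw [natDegree_divByMonic _ (monic_X_sub_C 1), natDegree_X_sub_C]
      omega
    · rw [← modByMonic_X_sub_C_eq_C_eval, modByMonic_add_div]
  have hterm (ζ : ℂ) (hζ : ζ ^ n = z ^ n) :
      (‖∑ l ∈ Finset.range n, ζ ^ l‖ : ℂ) ^ 2 * (C c + (X - C 1) * R).eval ζ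
        = c * (‖∑ l ∈ Finset.range n, ζ ^ l‖ ^ 2 : ℝ)
          + (z ^ n - 1) * (R.eval ζ * conj (∑ l ∈ Finset.range n, ζ ^ l)) := by
    rw [← hζ, ← geom_sum_mul]
    push_cast
    simp only [← Complex.mul_conj', eval_add, eval_mul, eval_sub, eval_C, eval_X]
    ring
  have hnode (j : ℕ) : (z * ω ^ j) ^ n = z ^ n := by
    rw [mul_pow, pow_right_comm, hω.pow_eq_one, one_pow, mul_one]
  rw [Finset.sum_congr rfl fun j _ ↦ hterm _ (hnode j), Finset.sum_add_distrib, ← Finset.mul_sum,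
    ← Finset.mul_sum, sum_eval_mul_conj_geom_sum hω hz hR, ← Complex.ofReal_sum,
    sum_norm_geom_sum_sq hω hz]
  have heval : (C c + (X - C 1) * R).eval 1 = c := by simp
  have hderiv : (derivative (C c + (X - C 1) * R)).eval 1 = R.eval 1 := by simp [derivative_mul]
  rw [heval, hderiv]
  push_cast
  ring

lemma norm_polarDerivative_one_le {Q : ℂ[X]} (hQ : Q.natDegree ≤ n) {C : ℝ}
    (hC : ∀ ζ : ℂ, ‖ζ‖ = 1 → ‖Q.eval ζ‖ ≤ C) {w : ℂ} (hw : ‖w‖ = 1) :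
    ‖n * Q.eval 1 + (w - 1) * Q.derivative.eval 1‖ ≤ n * C := by
  rcases n.eq_zero_or_pos with rfl | hn
  · simp [derivative_of_natDegree_zero (Nat.le_zero.1 hQ)]
  obtain ⟨z, rfl⟩ := IsAlgClosed.exists_pow_nat_eq w hn
  have hz : ‖z‖ = 1 := by
    rwa [norm_pow, pow_eq_one_iff_of_nonneg (norm_nonneg z) hn.ne'] at hw
  have hω := Complex.isPrimitiveRoot_exp n hn.ne'
  set ω := Complex.exp (2 * π * Complex.I / n)
  refine le_of_mul_le_mul_left ?_ (Nat.cast_pos.2 hn : (0 : ℝ) < n)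
  calc (n : ℝ) * ‖n * Q.eval 1 + (z ^ n - 1) * Q.derivative.eval 1‖
      = ‖∑ j ∈ Finset.range n,
          (‖∑ l ∈ Finset.range n, (z * ω ^ j) ^ l‖ : ℂ) ^ 2 * Q.eval (z * ω ^ j)‖ := by
        rw [sum_norm_geom_sum_sq_mul_eval hω hz hQ, norm_mul, Complex.norm_natCast]
    _ ≤ ∑ j ∈ Finset.range n, ‖∑ l ∈ Finset.range n, (z * ω ^ j) ^ l‖ ^ 2 * C := by
        refine norm_sum_le_of_le _ fun j _ ↦ ?_
        have hnode : ‖z * ω ^ j‖ = 1 := by simp [hz, hω.norm'_eq_one hn.ne']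
        rw [norm_mul, norm_pow, Complex.norm_real, norm_norm]
        gcongr
        exact hC _ hnode
    _ = n * (n * C) := by rw [← Finset.sum_mul, sum_norm_geom_sum_sq hω hz]; ring

lemma norm_polarDerivative_le {Q : ℂ[X]} (hQ : Q.natDegree ≤ n) {C : ℝ}
    (hC : ∀ ζ : ℂ, ‖ζ‖ = 1 → ‖Q.eval ζ‖ ≤ C) {z w : ℂ} (hz : ‖z‖ = 1) (hw : ‖w‖ = 1) :
    ‖n * Q.eval z + (w - z) * Q.derivative.eval z‖ ≤ n * C := by
  have hdeg : (Q.comp (Polynomial.C z * X)).natDegree ≤ n :=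
    calc (Q.comp (Polynomial.C z * X)).natDegree
        ≤ Q.natDegree * (Polynomial.C z * X).natDegree := natDegree_comp_le
      _ ≤ n * 1 := Nat.mul_le_mul hQ ((natDegree_C_mul_le z X).trans natDegree_X_le)
      _ = n := mul_one n
  have hbound (ζ : ℂ) (hζ : ‖ζ‖ = 1) : ‖(Q.comp (Polynomial.C z * X)).eval ζ‖ ≤ C := by
    simpa using hC (z * ζ) (by simp [hz, hζ])
  have hz0 : z ≠ 0 := norm_ne_zero_iff.1 (by simp [hz])
  have hpolar : n * Q.eval z + (w - z) * Q.derivative.eval z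
      = n * (Q.comp (Polynomial.C z * X)).eval 1
        + (w / z - 1) * (derivative (Q.comp (Polynomial.C z * X))).eval 1 := by
    have heval : (Q.comp (Polynomial.C z * X)).eval 1 = Q.eval z := by simp
    have hderiv : (derivative (Q.comp (Polynomial.C z * X))).eval 1
        = z * Q.derivative.eval z := by simp [derivative_comp]
    rw [heval, hderiv]
    field_simp
  rw [hpolar]
  exact norm_polarDerivative_one_le hdeg hbound (by simp [hz, hw])

end Quadrature

section TrigForm

open Polynomial

/-- `T` is a trigonometric form of degree `n`: a homogeneous form of degree `n` in `cos θ` and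
`sin θ`, equivalently a complex combination of `exp (i k θ)` with `k = -n, -n + 2, …, n`.
Multiplying by `exp (i n θ)` turns such a combination into a polynomial of degree at most `n` in
`exp (i θ) ^ 2`, which is how the notion is encoded. -/
def IsTrigForm (n : ℕ) (T : ℝ → ℂ) : Prop :=
  ∃ Q : ℂ[X], Q.natDegree ≤ n ∧
    ∀ θ : ℝ, Complex.exp (θ * Complex.I) ^ n * T θ = Q.eval (Complex.exp (θ * Complex.I) ^ 2)

lemma isTrigForm_cos : IsTrigForm 1 fun θ ↦ Complex.cos θ := by
  refine ⟨C (1 / 2) * (X + 1), by compute_degree, fun θ ↦ ?_⟩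
  have hinv : Complex.exp (θ * Complex.I) * Complex.exp (-θ * Complex.I) = 1 := by
    rw [← Complex.exp_add]; simp
  simp only [Complex.cos, pow_one, eval_mul, eval_C, eval_add, eval_X, eval_one]
  linear_combination hinv / 2

lemma isTrigForm_sin : IsTrigForm 1 fun θ ↦ Complex.sin θ := by
  refine ⟨C (-Complex.I / 2) * (X - 1), by compute_degree, fun θ ↦ ?_⟩
  have hinv : Complex.exp (θ * Complex.I) * Complex.exp (-θ * Complex.I) = 1 := by
    rw [← Complex.exp_add]; simp
  simp only [Complex.sin, pow_one, eval_mul, eval_C, eval_sub, eval_X, eval_one]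
  linear_combination Complex.I / 2 * hinv

lemma exists_exp_ofReal_mul_I_sq_eq {ζ : ℂ} (hζ : ‖ζ‖ = 1) :
    ∃ θ : ℝ, Complex.exp (θ * Complex.I) ^ 2 = ζ := by
  obtain ⟨t, rfl⟩ := (Complex.norm_eq_one_iff ζ).1 hζ
  refine ⟨t / 2, ?_⟩
  rw [← Complex.exp_nat_mul]
  push_cast
  ring_nf

lemma hasDerivAt_exp_ofReal_mul_I_pow (k : ℕ) (θ : ℝ) :
    HasDerivAt (fun t : ℝ ↦ Complex.exp (t * Complex.I) ^ k)
      (k * Complex.I * Complex.exp (θ * Complex.I) ^ k) θ := by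
  simp only [← Complex.exp_nat_mul]
  refine (((hasDerivAt_id θ).ofReal_comp.mul_const Complex.I).const_mul (k : ℂ)).cexp.congr_deriv ?_
  simp only [id_eq, Complex.ofReal_one, one_mul]
  ring

namespace IsTrigForm

variable {κ : Type*} {s : Finset κ} {n : ℕ}

lemma const_mul {T : ℝ → ℂ} (hT : IsTrigForm n T) (c : ℂ) : IsTrigForm n fun θ ↦ c * T θ := by
  obtain ⟨Q, hQ, hTQ⟩ := hT
  refine ⟨C c * Q, (natDegree_C_mul_le c Q).trans hQ, fun θ ↦ ?_⟩
  rw [mul_left_comm, hTQ, eval_mul, eval_C]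

lemma sum {T : κ → ℝ → ℂ} (hT : ∀ k ∈ s, IsTrigForm n (T k)) :
    IsTrigForm n fun θ ↦ ∑ k ∈ s, T k θ := by
  choose! Q hQ hTQ using hT
  refine ⟨∑ k ∈ s, Q k, natDegree_sum_le_of_forall_le s Q hQ, fun θ ↦ ?_⟩
  rw [Finset.mul_sum, eval_finsetSum]
  exact Finset.sum_congr rfl fun k hk ↦ hTQ k hk θ

lemma prod {d : κ → ℕ} {T : κ → ℝ → ℂ} (hT : ∀ k ∈ s, IsTrigForm (d k) (T k)) :
    IsTrigForm (∑ k ∈ s, d k) fun θ ↦ ∏ k ∈ s, T k θ := by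
  choose! Q hQ hTQ using hT
  refine ⟨∏ k ∈ s, Q k, (natDegree_prod_le s Q).trans (Finset.sum_le_sum hQ), fun θ ↦ ?_⟩
  rw [← Finset.prod_pow_eq_pow_sum, ← Finset.prod_mul_distrib, eval_prod]
  exact Finset.prod_congr rfl fun k hk ↦ hTQ k hk θ

/-- The Bernstein–Szegő inequality: it is the polar derivative bound read on the unit circle, with
pole `((a + b i) exp (i θ)) ^ 2`. -/
lemma norm_mul_add_mul_deriv_le {T : ℝ → ℂ} (hT : IsTrigForm n T) {C : ℝ} (hC : ∀ θ, ‖T θ‖ ≤ C)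
    {θ : ℝ} {T' : ℂ} (hT' : HasDerivAt T T' θ) {a b : ℝ} (hab : a ^ 2 + b ^ 2 = 1) :
    ‖n * a * T θ + b * T'‖ ≤ n * C := by
  obtain ⟨Q, hQ, hTQ⟩ := hT
  have hQC (ζ : ℂ) (hζ : ‖ζ‖ = 1) : ‖Q.eval ζ‖ ≤ C := by
    obtain ⟨t, rfl⟩ := exists_exp_ofReal_mul_I_sq_eq hζ
    rw [← hTQ, norm_mul, norm_pow, Complex.norm_exp_ofReal_mul_I, one_pow, one_mul]
    exact hC t
  set u := Complex.exp (θ * Complex.I)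
  have hu_norm : ‖u‖ = 1 := Complex.norm_exp_ofReal_mul_I θ
  have hderiv : n * Complex.I * u ^ n * T θ + u ^ n * T'
      = Q.derivative.eval (u ^ 2) * (2 * Complex.I * u ^ 2) := by
    have hleft := (hasDerivAt_exp_ofReal_mul_I_pow n θ).mul hT'
    have hright := (Q.hasDerivAt (u ^ 2)).comp θ (hasDerivAt_exp_ofReal_mul_I_pow 2 θ)
    rw [show _ * T = _ from funext hTQ] at hleft
    exact hleft.unique hright
  set v : ℂ := a + b * Complex.I with hv
  set v' : ℂ := a - b * Complex.I
  have hv_mul : v' * v = 1 := by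
    have hab' : (a : ℂ) ^ 2 + (b : ℂ) ^ 2 = 1 := by exact_mod_cast hab
    linear_combination hab' - (b : ℂ) ^ 2 * Complex.I_sq
  have hv_norm : ‖v‖ = 1 := by rw [hv, Complex.norm_add_mul_I, hab, sqrt_one]
  have hv'_norm : ‖v'‖ = 1 := by simpa [hv_norm] using congrArg norm hv_mul
  have hpolar : u ^ n * (n * a * T θ + b * T')
      = v' * (n * Q.eval (u ^ 2) + ((v * u) ^ 2 - u ^ 2) * Q.derivative.eval (u ^ 2)) := by
    rw [← hTQ]
    linear_combination (b : ℂ) * hderiv - v * u ^ 2 * Q.derivative.eval (u ^ 2) * hv_mul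
  calc ‖n * a * T θ + b * T'‖
      = ‖n * Q.eval (u ^ 2) + ((v * u) ^ 2 - u ^ 2) * Q.derivative.eval (u ^ 2)‖ := by
        simpa [hu_norm, hv'_norm] using congrArg norm hpolar
    _ ≤ n * C := norm_polarDerivative_le hQ hQC (by simp [hu_norm]) (by simp [hv_norm, hu_norm])

end IsTrigForm

lemma isTrigForm_multilinear_cos_add_sin {ι E : Type*} [Fintype ι] [AddCommGroup E] [Module ℝ E]
    (M : MultilinearMap ℝ (fun _ : ι ↦ E) ℝ) (x y : E) :
    IsTrigForm (Fintype.card ι) fun θ ↦ (M fun _ ↦ cos θ • x + sin θ • y : ℂ) := by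
  classical
  have hexpand (θ : ℝ) : ((M fun _ ↦ cos θ • x + sin θ • y : ℝ) : ℂ) = ∑ r : ι → Fin 2,
      (M fun i ↦ ![x, y] (r i) : ℂ) * ∏ i, ![Complex.cos θ, Complex.sin θ] (r i) := by
    have hsum : cos θ • x + sin θ • y = ∑ k, ![cos θ, sin θ] k • ![x, y] k := by
      simp [Fin.sum_univ_two]
    have hcast (k : Fin 2) : ((![cos θ, sin θ] k : ℝ) : ℂ) = ![Complex.cos θ, Complex.sin θ] k := by
      fin_cases k <;> simp
    simp only [hsum, M.map_sum, M.map_smul_univ, smul_eq_mul, Complex.ofReal_sum,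
      Complex.ofReal_mul, Complex.ofReal_prod, hcast, mul_comm]
  have hfactor (k : Fin 2) : IsTrigForm 1 fun θ ↦ ![Complex.cos θ, Complex.sin θ] k := by
    fin_cases k
    exacts [isTrigForm_cos, isTrigForm_sin]
  simp only [hexpand]
  refine IsTrigForm.sum fun r _ ↦ IsTrigForm.const_mul ?_ _
  simpa using IsTrigForm.prod (s := Finset.univ) fun i _ ↦ hfactor (r i)

end TrigForm

section Diagonal

variable {𝕜 ι E F : Type*} [NontriviallyNormedField 𝕜] [NormedAddCommGroup E]
  [NormedSpace 𝕜 E] [NormedAddCommGroup F] [NormedSpace 𝕜 F]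
  (M : ContinuousMultilinearMap 𝕜 (fun _ : ι ↦ E) F)

lemma bddAbove_norm_diag_closedBall [Finite ι] :
    BddAbove ((fun x ↦ ‖M fun _ ↦ x‖) '' closedBall 0 1) := by
  cases nonempty_fintype ι
  exact ⟨‖M‖, forall_mem_image.2 fun x hx ↦
    M.unit_le_opNorm ((pi_norm_const_le x).trans (mem_closedBall_zero_iff.1 hx))⟩

lemma hasFDerivAt_diag [Fintype ι] [DecidableEq ι] (x : E) :
    HasFDerivAt (fun x ↦ M fun _ ↦ x) (M.linearDeriv (fun _ ↦ x) ∘L .pi fun _ ↦ .id 𝕜 E) x :=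
  (M.hasFDerivAt fun _ ↦ x).comp x (ContinuousLinearMap.pi fun _ : ι ↦ .id 𝕜 E).hasFDerivAt

lemma differentiable_diag [Finite ι] : Differentiable 𝕜 fun x ↦ M fun _ ↦ x := by
  cases nonempty_fintype ι
  classical
  exact fun x ↦ (hasFDerivAt_diag M x).differentiableAt

variable [Fintype ι]

lemma fderiv_diag_apply [DecidableEq ι] (x y : E) :
    fderiv 𝕜 (fun x ↦ M fun _ ↦ x) x y = ∑ i, M (Function.update (fun _ ↦ x) i y) := by
  simp [(hasFDerivAt_diag M x).fderiv]

lemma fderiv_diag_apply_self (x : E) :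
    fderiv 𝕜 (fun x ↦ M fun _ ↦ x) x x = (Fintype.card ι : 𝕜) • M fun _ ↦ x := by
  classical
  simp [fderiv_diag_apply, Nat.cast_smul_eq_nsmul]

lemma fderiv_diag_smul (c : 𝕜) (x : E) :
    fderiv 𝕜 (fun x ↦ M fun _ ↦ x) (c • x)
      = c ^ (Fintype.card ι - 1) • fderiv 𝕜 (fun x ↦ M fun _ ↦ x) x := by
  classical
  ext y
  have h (i : ι) := M.toMultilinearMap.map_update_smul_left (fun _ ↦ x) i c y
  simp only [fderiv_diag_apply, smul_apply, Finset.smul_sum]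
  exact Finset.sum_congr rfl fun i _ ↦ h i

end Diagonal

section LowerBound

variable {ι E F : Type*} [Fintype ι] [NormedAddCommGroup E] [NormedSpace ℝ E]
  [NormedAddCommGroup F] [NormedSpace ℝ F] {M : ContinuousMultilinearMap ℝ (fun _ : ι ↦ E) F}

lemma card_mul_norm_diag_le_of_lipschitzOnWith {K : NNReal}
    (hK : LipschitzOnWith K (fun x ↦ M fun _ ↦ x) (closedBall 0 1)) {x : E}
    (hx : x ∈ closedBall 0 1) : Fintype.card ι * ‖M fun _ ↦ x‖ ≤ K := by
  have hball : ball (0 : E) 1 ⊆ {x | Fintype.card ι * ‖M fun _ ↦ x‖ ≤ K} := fun x hx ↦ by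
    calc Fintype.card ι * ‖M fun _ ↦ x‖ = ‖fderiv ℝ (fun x ↦ M fun _ ↦ x) x x‖ := by
          rw [fderiv_diag_apply_self, norm_smul, Real.norm_natCast]
      _ ≤ K * ‖x‖ := ContinuousLinearMap.le_of_opNorm_le _
          (norm_fderiv_le_of_lipschitzOn ℝ (closedBall_mem_nhds_of_mem hx) hK) x
      _ ≤ K := mul_le_of_le_one_right K.coe_nonneg (mem_ball_zero_iff.1 hx).le
  have hclosed : IsClosed {x : E | Fintype.card ι * ‖M fun _ ↦ x‖ ≤ K} :=
    isClosed_le (by fun_prop) continuous_const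
  exact closure_minimal hball hclosed (by rwa [closure_ball 0 one_ne_zero])

end LowerBound

section UpperBound

variable {ι H : Type*} [Fintype ι] [NormedAddCommGroup H] [InnerProductSpace ℝ H]

lemma exists_eq_smul_add_smul_and_inner_eq_zero {e y : H} (he : ‖e‖ = 1) (hy : ‖y‖ = 1) :
    ∃ (u : H) (a b : ℝ), inner ℝ e u = 0 ∧ ‖u‖ ≤ 1 ∧ a ^ 2 + b ^ 2 = 1 ∧ y = a • e + b • u := by
  set p := y - inner ℝ e y • e with hp
  have horth : inner ℝ e p = 0 := by
    simp [hp, inner_sub_right, inner_smul_right, he]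
  -- When `p = 0`, which is forced in dimension one, `‖p‖⁻¹ • p` is `0`.
  refine ⟨‖p‖⁻¹ • p, inner ℝ e y, ‖p‖, ?_, ?_, ?_, ?_⟩
  · rw [inner_smul_right, horth, mul_zero]
  · rw [norm_smul, norm_inv, norm_norm]
    exact inv_mul_le_one
  · have hpyth : ‖inner ℝ e y • e + p‖ ^ 2 = ‖inner ℝ e y • e‖ ^ 2 + ‖p‖ ^ 2 := by
      simp [norm_add_sq_real, inner_smul_left, horth]
    rw [hp, add_sub_cancel, hy, norm_smul, he, mul_one, Real.norm_eq_abs, sq_abs] at hpyth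
    simpa using hpyth.symm
  · rcases eq_or_ne p 0 with hp0 | hp0
    · simpa [hp0] using sub_eq_zero.1 hp0
    · rw [smul_inv_smul₀ (norm_ne_zero_iff.2 hp0), hp, add_sub_cancel]

lemma norm_cos_smul_add_sin_smul_le_one {e u : H} (he : ‖e‖ ≤ 1) (hu : ‖u‖ ≤ 1)
    (horth : inner ℝ e u = 0) (θ : ℝ) : ‖cos θ • e + sin θ • u‖ ≤ 1 := by
  refine (sq_le_one_iff₀ (norm_nonneg _)).1 ?_
  calc ‖cos θ • e + sin θ • u‖ ^ 2 = cos θ ^ 2 * ‖e‖ ^ 2 + sin θ ^ 2 * ‖u‖ ^ 2 := by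
        simp [norm_add_sq_real, inner_smul_left, inner_smul_right, horth, norm_smul, mul_pow]
    _ ≤ cos θ ^ 2 * 1 ^ 2 + sin θ ^ 2 * 1 ^ 2 := by gcongr
    _ = 1 := by rw [one_pow, mul_one, mul_one, cos_sq_add_sin_sq]

variable {M : ContinuousMultilinearMap ℝ (fun _ : ι ↦ H) ℝ} {C : ℝ}

lemma abs_fderiv_diag_apply_le_of_norm_eq_one (hC : ∀ x ∈ closedBall (0 : H) 1, |M fun _ ↦ x| ≤ C)
    {e y : H} (he : ‖e‖ = 1) (hy : ‖y‖ = 1) :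
    |fderiv ℝ (fun x ↦ M fun _ ↦ x) e y| ≤ Fintype.card ι * C := by
  obtain ⟨u, a, b, horth, hu, hab, rfl⟩ := exists_eq_smul_add_smul_and_inner_eq_zero he hy
  set P := fun x ↦ M fun _ ↦ x
  have hcircle : HasDerivAt (fun θ ↦ cos θ • e + sin θ • u) u 0 := by
    simpa using ((hasDerivAt_cos 0).smul_const e).fun_add ((hasDerivAt_sin 0).smul_const u)
  have hderiv : HasDerivAt (fun θ ↦ P (cos θ • e + sin θ • u)) (fderiv ℝ P e u) 0 := by
    refine HasFDerivAt.comp_hasDerivAt (l := P) 0 ?_ hcircle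
    simpa using (differentiable_diag M e).hasFDerivAt
  have hbound (θ : ℝ) : ‖(P (cos θ • e + sin θ • u) : ℂ)‖ ≤ C := by
    rw [Complex.norm_real]
    exact hC _ (mem_closedBall_zero_iff.2 (norm_cos_smul_add_sin_smul_le_one he.le hu horth θ))
  have hform := isTrigForm_multilinear_cos_add_sin M.toMultilinearMap e u
  have hszego := hform.norm_mul_add_mul_deriv_le hbound hderiv.ofReal_comp hab
  rw [map_add, map_smul, map_smul, fderiv_diag_apply_self, ← Real.norm_eq_abs, ← Complex.norm_real]
  convert hszego using 2
  simp only [P, cos_zero, sin_zero, one_smul, zero_smul, add_zero, smul_eq_mul,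
    ContinuousMultilinearMap.coe_coe]
  push_cast
  ring

lemma norm_fderiv_diag_le (hC : ∀ x ∈ closedBall (0 : H) 1, |M fun _ ↦ x| ≤ C) {x : H}
    (hx : x ∈ closedBall 0 1) : ‖fderiv ℝ (fun x ↦ M fun _ ↦ x) x‖ ≤ Fintype.card ι * C := by
  have hC_nonneg : 0 ≤ C := (abs_nonneg _).trans (hC 0 (mem_closedBall_self zero_le_one))
  refine ContinuousLinearMap.opNorm_le_of_unit_norm (by positivity) fun y hy ↦ ?_
  obtain ⟨e, he, hxe⟩ : ∃ e : H, ‖e‖ = 1 ∧ x = ‖x‖ • e := by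
    rcases eq_or_ne x 0 with rfl | hx0
    · exact ⟨y, hy, by simp⟩
    · exact ⟨‖x‖⁻¹ • x, norm_smul_inv_norm hx0, (smul_inv_smul₀ (norm_ne_zero_iff.2 hx0) x).symm⟩
  have hpow : ‖x‖ ^ (Fintype.card ι - 1) ≤ 1 :=
    pow_le_one₀ (norm_nonneg x) (mem_closedBall_zero_iff.1 hx)
  rw [hxe, fderiv_diag_smul, smul_apply, norm_smul, norm_pow, norm_norm]
  exact (mul_le_of_le_one_left (norm_nonneg _) hpow).trans
    (abs_fderiv_diag_apply_le_of_norm_eq_one hC he hy)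

lemma lipschitzOnWith_diag_of_abs_le (hC : ∀ x ∈ closedBall (0 : H) 1, |M fun _ ↦ x| ≤ C) :
    LipschitzOnWith (Real.toNNReal (Fintype.card ι * C)) (fun x ↦ M fun _ ↦ x) (closedBall 0 1) :=
  (convex_closedBall 0 1).lipschitzOnWith_of_nnnorm_fderiv_le (fun x _ ↦ differentiable_diag M x)
    fun _ hx ↦ NNReal.le_toNNReal_of_coe_le (norm_fderiv_diag_le hC hx)

end UpperBound

theorem statement10_general {ι H : Type*} [Fintype ι] [NormedAddCommGroup H]
    [InnerProductSpace ℝ H] (M : ContinuousMultilinearMap ℝ (fun _ : ι ↦ H) ℝ) :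
    lipConstOn (fun x ↦ M fun _ ↦ x) (closedBall 0 1)
      = Fintype.card ι * sSup ((fun x ↦ |M fun _ ↦ x|) '' closedBall 0 1) := by
  set S := (fun x ↦ |M fun _ ↦ x|) '' closedBall 0 1
  have hle (x) (hx : x ∈ closedBall (0 : H) 1) : |M fun _ ↦ x| ≤ sSup S :=
    le_csSup (bddAbove_norm_diag_closedBall M) (mem_image_of_mem _ hx)
  have hS_nonneg : 0 ≤ sSup S := Real.sSup_nonneg (forall_mem_image.2 fun _ _ ↦ abs_nonneg _)
  refine IsLeast.csInf_eq
    ⟨⟨by positivity, lipschitzOnWith_diag_of_abs_le hle⟩, fun K ⟨hK_nonneg, hK⟩ ↦ ?_⟩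
  rw [← smul_eq_mul, ← Real.sSup_smul_of_nonneg (Nat.cast_nonneg _)]
  refine Real.sSup_le ?_ hK_nonneg
  rintro _ ⟨_, ⟨x, hx, rfl⟩, rfl⟩
  simpa [hK_nonneg] using card_mul_norm_diag_le_of_lipschitzOnWith hK hx

/-- **Hilbert-space isometry of the polynomial embedding.** For an `n`-homogeneous
polynomial `P` on a real Hilbert space `H` (given by a bounded `n`-linear form `M` via
`P x = M(x,…,x)`), the best Lipschitz constant of `P` restricted to the closed unit
ball equals `n` times the polynomial norm `‖P‖_P = sup_{x ∈ B_H} |P x|`. Consequently,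
`P ↦ P↾_{B_H}` is a multiple of an isometric embedding of `P(ⁿH)` into `Lip₀(B_H)`. -/
theorem statement10 (H : Type*) [NormedAddCommGroup H] [InnerProductSpace ℝ H]
    [CompleteSpace H] (n : ℕ) (hn : 1 ≤ n)
    (M : ContinuousMultilinearMap ℝ (fun _ : Fin n => H) ℝ) :
    lipConstOn (fun x : H => M (fun _ => x)) (Metric.closedBall (0 : H) 1)
      = (n : ℝ) * sSup ((fun x : H => |M (fun _ => x)|) '' Metric.closedBall (0 : H) 1) := by
  simpa using statement10_general M
end
end

section
/- Let E = (ℝⁿ,‖·‖₂) and let O_n be the orthogonal group of E, equipped with the operator-norm topology. For every f ∈ C₀¹(B_E), the map O_n → C₀¹(B_E), ω ↦ f∘ω, is continuous (where C₀¹(B_E) carries the Lipschitz norm). Consequently, for every bounded linear operator Q from C₀¹(B_E) to a Banach space of functions on B_E, the map ω ↦ Q(f∘ω)∘ω⁻¹ is continuous. -/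
open Metric Set Real

noncomputable section

/-- The closed unit ball of a normed space, as a pointed metric space. -/
def UBall (X : Type*) [NormedAddCommGroup X] : Set X := Metric.closedBall (0 : X) 1

/-- The base point of the unit ball. -/
def zeroB (X : Type*) [NormedAddCommGroup X] : ↥(UBall X) :=
  ⟨0, Metric.mem_closedBall_self zero_le_one⟩

/-- `Lip₀(B_X)`: real-valued Lipschitz functions on the closed unit ball vanishing at `0`. -/
def Lip0B (X : Type*) [NormedAddCommGroup X] : Set (↥(UBall X) → ℝ) :=
  {f | (∃ K : NNReal, LipschitzWith K f) ∧ f (zeroB X) = 0}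

/-- The image of the space `P(ᵏX)` of `k`-homogeneous polynomials on `X` inside the
functions on the unit ball, via the restriction embedding `P ↦ P↾_{B_X}`. -/
def PhomB (k : ℕ) (X : Type*) [NormedAddCommGroup X] [NormedSpace ℝ X] :
    Set (↥(UBall X) → ℝ) :=
  {f | ∃ M : ContinuousMultilinearMap ℝ (fun _ : Fin k => X) ℝ,
    ∀ x : ↥(UBall X), f x = M (fun _ => (x : X))}

/-- `C₀¹(B_E)`: functions on the closed unit ball that are continuous on the closed ball,
continuously differentiable on the open ball with uniformly continuous derivative,
and vanish at `0`. -/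
def C01B (E : Type*) [NormedAddCommGroup E] [NormedSpace ℝ E] :
    Set (↥(UBall E) → ℝ) :=
  {f | ∃ g : E → ℝ,
    (∀ x : ↥(UBall E), f x = g x) ∧
    ContinuousOn g (UBall E) ∧ g 0 = 0 ∧
    ∃ g' : E → (E →L[ℝ] ℝ),
      (∀ x ∈ Metric.ball (0 : E) 1, HasFDerivAt g (g' x) x) ∧
      UniformContinuousOn g' (Metric.ball (0 : E) 1)}

/-- A linear isometry of a normed space maps the closed unit ball into itself. -/
def ballMap {E : Type*} [NormedAddCommGroup E] [NormedSpace ℝ E] (ω : E ≃ₗᵢ[ℝ] E)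
    (x : ↥(UBall E)) : ↥(UBall E) :=
  ⟨ω x, by
    have hx : ‖(x : E)‖ ≤ 1 := mem_closedBall_zero_iff.mp x.2
    simpa [UBall, mem_closedBall_zero_iff, ω.norm_map] using hx⟩

/-- Composition `f ∘ ω` of a function on the unit ball with a linear isometry. -/
def compIso {E : Type*} [NormedAddCommGroup E] [NormedSpace ℝ E] (ω : E ≃ₗᵢ[ℝ] E)
    (f : ↥(UBall E) → ℝ) : ↥(UBall E) → ℝ :=
  fun x => f (ballMap ω x)

/-!
For `f ∈ C₀¹(B_E)`, the gradient of `f ∘ ω - f ∘ ω₀` at `x` is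
`(∇f(ωx) - ∇f(ω₀x)) ∘ ω + ∇f(ω₀x) ∘ (ω - ω₀)`. Uniform continuity of `∇f` makes the first summand
small, uniformly in `x`; it also makes `∇f` bounded on the ball, which is convex and bounded, so
that the second one is small too. The mean value inequality turns this into a Lipschitz bound.
For the second claim, `ω ↦ Q(f ∘ ω)` is continuous because `Q` is bounded, and isometries act on
functions on the ball without changing the Lipschitz norm.
-/

section UniformlyContinuousDerivative

variable {E F G : Type*} [NormedAddCommGroup E] [NormedSpace ℝ E]
  [NormedAddCommGroup F] [NormedSpace ℝ F] [NormedAddCommGroup G] [NormedSpace ℝ G]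

lemma isBounded_image_of_uniformContinuousOn_of_convex {β : Type*} [PseudoMetricSpace β]
    {s : Set E} {f : E → β} (hconv : Convex ℝ s) (hs : Bornology.IsBounded s)
    (hf : UniformContinuousOn f s) : Bornology.IsBounded (f '' s) := by
  obtain ⟨δ, hδ, hfδ⟩ := Metric.uniformContinuousOn_iff_le.1 hf 1 one_pos
  obtain ⟨D, hD⟩ := Metric.isBounded_iff.1 hs
  obtain ⟨N, hN⟩ := exists_nat_gt (D / δ)
  refine Metric.isBounded_iff.2 ⟨N, ?_⟩
  rintro _ ⟨x, hx, rfl⟩ _ ⟨y, hy, rfl⟩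
  have hN0 : (0 : ℝ) < N := (div_nonneg (dist_nonneg.trans (hD hx hy)) hδ.le).trans_lt hN
  -- `N` equal pieces of any segment of `s` are no longer than the modulus `δ`.
  let p : ℕ → E := fun i => AffineMap.lineMap x y (i / N : ℝ)
  have hp : ∀ i ≤ N, p i ∈ s := fun i hi =>
    hconv.lineMap_mem hx hy ⟨by positivity, div_le_one_of_le₀ (mod_cast hi) hN0.le⟩
  have hstep (i : ℕ) : dist (p i) (p (i + 1)) ≤ δ := by
    calc dist (p i) (p (i + 1)) = dist x y / N := by
          rw [dist_lineMap_lineMap, Real.dist_eq, ← sub_div, Nat.cast_succ, sub_add_cancel_left,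
            abs_div, abs_neg, abs_one, abs_of_pos hN0, one_div_mul_eq_div]
      _ ≤ δ := by
          rw [div_le_iff₀ hN0, mul_comm]
          exact (hD hx hy).trans ((div_lt_iff₀ hδ).1 hN).le
  calc dist (f x) (f y) = dist (f (p 0)) (f (p N)) := by simp [p, hN0.ne']
    _ ≤ ∑ _i ∈ Finset.range N, (1 : ℝ) := dist_le_range_sum_of_dist_le N fun {i} hi =>
        hfδ _ (hp i hi.le) _ (hp (i + 1) hi) (hstep i)
    _ = N := by simp

lemma mapsTo_ball_of_opNorm_le_one {A : E →L[ℝ] F} (hA : ‖A‖ ≤ 1) (r : ℝ) :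
    MapsTo A (ball 0 r) (ball 0 r) := fun x hx => by
  rw [mem_ball_zero_iff] at hx ⊢
  exact (A.le_of_opNorm_le hA x).trans_lt (by rwa [one_mul])

lemma mapsTo_closedBall_of_opNorm_le_one {A : E →L[ℝ] F} (hA : ‖A‖ ≤ 1) (r : ℝ) :
    MapsTo A (closedBall 0 r) (closedBall 0 r) := fun x hx => by
  rw [mem_closedBall_zero_iff] at hx ⊢
  exact (A.le_of_opNorm_le hA x).trans (by rwa [one_mul])

lemma opNorm_comp_sub_comp_le (φ ψ : F →L[ℝ] G) (A B : E →L[ℝ] F) :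
    ‖φ.comp A - ψ.comp B‖ ≤ ‖φ - ψ‖ * ‖A‖ + ‖ψ‖ * ‖A - B‖ := by
  have hsplit : φ.comp A - ψ.comp B = (φ - ψ).comp A + ψ.comp (A - B) := by
    rw [ContinuousLinearMap.sub_comp, ContinuousLinearMap.comp_sub, sub_add_sub_cancel]
  rw [hsplit]
  exact norm_add_le_of_le (ContinuousLinearMap.opNorm_comp_le _ _)
    (ContinuousLinearMap.opNorm_comp_le _ _)

lemma exists_opNorm_comp_sub_comp_le {φ : F → F →L[ℝ] G}
    (hφ : UniformContinuousOn φ (ball 0 1)) {ε : ℝ} (hε : 0 < ε) :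
    ∃ δ > 0, ∀ A B : E →L[ℝ] F, ‖A‖ ≤ 1 → ‖B‖ ≤ 1 → ‖A - B‖ ≤ δ →
      ∀ x ∈ ball (0 : E) 1, ‖(φ (A x)).comp A - (φ (B x)).comp B‖ ≤ ε := by
  obtain ⟨C, hC, hφC⟩ := (isBounded_image_of_uniformContinuousOn_of_convex
    (convex_ball 0 1) isBounded_ball hφ).exists_pos_norm_le
  obtain ⟨η, hη, hφη⟩ := Metric.uniformContinuousOn_iff_le.1 hφ (ε / 2) (half_pos hε)
  refine ⟨min η (ε / 2 / C), by positivity, fun A B hA hB hAB x hx => ?_⟩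
  have hAx := mapsTo_ball_of_opNorm_le_one hA 1 hx
  have hBx := mapsTo_ball_of_opNorm_le_one hB 1 hx
  have hdist : dist (A x) (B x) ≤ η := by
    rw [dist_eq_norm, ← sub_apply]
    exact ((A - B).unit_le_opNorm x (mem_ball_zero_iff.1 hx).le).trans
      (hAB.trans (min_le_left _ _))
  calc ‖(φ (A x)).comp A - (φ (B x)).comp B‖
      ≤ ‖φ (A x) - φ (B x)‖ * ‖A‖ + ‖φ (B x)‖ * ‖A - B‖ := opNorm_comp_sub_comp_le _ _ _ _
    _ ≤ ε / 2 * 1 + C * (ε / 2 / C) := by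
        gcongr
        · exact (dist_eq_norm _ _).symm.trans_le (hφη _ hAx _ hBx hdist)
        · exact hφC _ (mem_image_of_mem φ hBx)
        · exact hAB.trans (min_le_right _ _)
    _ = ε := by rw [mul_one, mul_div_cancel₀ _ hC.ne', add_halves]

lemma lipschitzOnWith_closure_of_nnnorm_hasFDerivWithin_le {s : Set E} {g : E → G}
    {g' : E → E →L[ℝ] G} {C : NNReal} (hs : Convex ℝ s) (hg : ContinuousOn g (closure s))
    (hg' : ∀ x ∈ s, HasFDerivWithinAt g (g' x) s x) (hC : ∀ x ∈ s, ‖g' x‖₊ ≤ C) :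
    LipschitzOnWith C g (closure s) :=
  (lipschitzOnWith_closure_iff hg).2 (hs.lipschitzOnWith_of_nnnorm_hasFDerivWithin_le hg' hC)

lemma exists_lipschitzOnWith_comp_sub_comp {g : F → G} {g' : F → F →L[ℝ] G}
    (hg : ContinuousOn g (closedBall 0 1)) (hg' : ∀ x ∈ ball 0 1, HasFDerivAt g (g' x) x)
    (hu : UniformContinuousOn g' (ball 0 1)) {ε : ℝ} (hε : 0 < ε) :
    ∃ δ > 0, ∀ A B : E →L[ℝ] F, ‖A‖ ≤ 1 → ‖B‖ ≤ 1 → ‖A - B‖ ≤ δ →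
      LipschitzOnWith ε.toNNReal (fun x => g (A x) - g (B x)) (closedBall 0 1) := by
  obtain ⟨δ, hδ, hbound⟩ := exists_opNorm_comp_sub_comp_le (E := E) hu hε
  refine ⟨δ, hδ, fun A B hA hB hAB => ?_⟩
  have hcont {T : E →L[ℝ] F} (hT : ‖T‖ ≤ 1) : ContinuousOn (fun x => g (T x)) (closedBall 0 1) :=
    hg.comp T.continuous.continuousOn (mapsTo_closedBall_of_opNorm_le_one hT 1)
  have hderiv {T : E →L[ℝ] F} (hT : ‖T‖ ≤ 1) :
      ∀ x ∈ ball (0 : E) 1, HasFDerivAt (fun x => g (T x)) ((g' (T x)).comp T) x :=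
    fun x hx => (hg' _ (mapsTo_ball_of_opNorm_le_one hT 1 hx)).comp x T.hasFDerivAt
  rw [← closure_ball (0 : E) one_ne_zero] at hcont ⊢
  exact lipschitzOnWith_closure_of_nnnorm_hasFDerivWithin_le (convex_ball 0 1)
    ((hcont hA).sub (hcont hB))
    (fun x hx => ((hderiv hA x hx).sub (hderiv hB x hx)).hasFDerivWithinAt)
    fun x hx => NNReal.le_toNNReal_of_coe_le (hbound A B hA hB hAB x hx)

end UniformlyContinuousDerivative

section IsometryGroup

variable {E : Type*} [NormedAddCommGroup E] [NormedSpace ℝ E]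

/-- Continuity at `ω₀` of a map from the isometry group of `E`, with the operator norm, to the
functions on the unit ball, with the Lipschitz norm. The isometry group and the function space
carry no topology here, so both norms are spelled out. -/
def LipContinuousAt (Φ : (E ≃ₗᵢ[ℝ] E) → ↥(UBall E) → ℝ) (ω₀ : E ≃ₗᵢ[ℝ] E) : Prop :=
  ∀ ε : ℝ, 0 < ε → ∃ δ > (0 : ℝ), ∀ ω : E ≃ₗᵢ[ℝ] E, (∀ x : E, ‖ω x - ω₀ x‖ ≤ δ * ‖x‖) →
    LipschitzWith ε.toNNReal (fun x => Φ ω x - Φ ω₀ x)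

lemma sub_mem_C01B {f h : ↥(UBall E) → ℝ} (hf : f ∈ C01B E) (hh : h ∈ C01B E) :
    f - h ∈ C01B E := by
  obtain ⟨g, hfg, hg, hg0, g', hg', hgu⟩ := hf
  obtain ⟨k, hhk, hk, hk0, k', hk', hku⟩ := hh
  refine ⟨g - k, fun x => by simp [hfg, hhk], hg.sub hk, by simp [hg0, hk0], g' - k',
    fun x hx => (hg' x hx).sub (hk' x hx), ?_⟩
  rw [uniformContinuousOn_iff_restrict] at hgu hku ⊢
  exact hgu.sub hku

lemma compIso_mem_C01B (ω : E ≃ₗᵢ[ℝ] E) {f : ↥(UBall E) → ℝ} (hf : f ∈ C01B E) :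
    compIso ω f ∈ C01B E := by
  obtain ⟨g, hfg, hg, hg0, g', hg', hgu⟩ := hf
  let A : E →L[ℝ] E := ω.toLinearIsometry.toContinuousLinearMap
  have hA : ‖A‖ ≤ 1 := ω.toLinearIsometry.norm_toContinuousLinearMap_le
  have hball : MapsTo A (ball 0 1) (ball 0 1) := mapsTo_ball_of_opNorm_le_one hA 1
  refine ⟨g ∘ A, fun x => hfg (ballMap ω x),
    hg.comp A.continuous.continuousOn (mapsTo_closedBall_of_opNorm_le_one hA 1),
    by simpa using hg0, fun x => (g' (A x)).comp A,
    fun x hx => (hg' _ (hball hx)).comp x A.hasFDerivAt, ?_⟩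
  have hprecomp := ((ContinuousLinearMap.compL ℝ E E ℝ).flip A).uniformContinuous
  exact hprecomp.comp_uniformContinuousOn
    (hgu.comp A.uniformContinuous.uniformContinuousOn hball)

lemma lipschitzWith_compIso (ω : E ≃ₗᵢ[ℝ] E) {f : ↥(UBall E) → ℝ} {L : NNReal}
    (hf : LipschitzWith L f) : LipschitzWith L (compIso ω f) := fun x y =>
  (hf (ballMap ω x) (ballMap ω y)).trans_eq (congrArg _ (ω.isometry x y))

lemma norm_symm_sub_symm_le {ω ω₀ : E ≃ₗᵢ[ℝ] E} {δ : ℝ}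
    (h : ∀ x, ‖ω x - ω₀ x‖ ≤ δ * ‖x‖) (x : E) : ‖ω.symm x - ω₀.symm x‖ ≤ δ * ‖x‖ :=
  calc ‖ω.symm x - ω₀.symm x‖ = ‖ω (ω₀.symm x) - ω₀ (ω₀.symm x)‖ := by
        rw [← ω.norm_map, map_sub, ω.apply_symm_apply, ω₀.apply_symm_apply, norm_sub_rev]
    _ ≤ δ * ‖x‖ := by simpa only [ω₀.symm.norm_map] using h (ω₀.symm x)

lemma lipContinuousAt_compIso {f : ↥(UBall E) → ℝ} (hf : f ∈ C01B E) (ω₀ : E ≃ₗᵢ[ℝ] E) :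
    LipContinuousAt (fun ω => compIso ω f) ω₀ := by
  intro ε hε
  obtain ⟨g, hfg, hg, -, g', hg', hgu⟩ := hf
  obtain ⟨δ, hδ, hlip⟩ := exists_lipschitzOnWith_comp_sub_comp (E := E) hg hg' hgu hε
  refine ⟨δ, hδ, fun ω hω => ?_⟩
  have hlip' := hlip ω.toLinearIsometry.toContinuousLinearMap
    ω₀.toLinearIsometry.toContinuousLinearMap
    ω.toLinearIsometry.norm_toContinuousLinearMap_le
    ω₀.toLinearIsometry.norm_toContinuousLinearMap_le
    (ContinuousLinearMap.opNorm_le_bound _ hδ.le hω)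
  simp only [compIso, hfg]
  exact hlip'.to_restrict

namespace LipContinuousAt

variable {Φ : (E ≃ₗᵢ[ℝ] E) → ↥(UBall E) → ℝ} {ω₀ : E ≃ₗᵢ[ℝ] E}

lemma comp_symm (hΦ : LipContinuousAt Φ ω₀.symm) : LipContinuousAt (fun ω => Φ ω.symm) ω₀ := by
  intro ε hε
  obtain ⟨δ, hδ, hlip⟩ := hΦ ε hε
  exact ⟨δ, hδ, fun ω hω => hlip ω.symm (norm_symm_sub_symm_le hω)⟩

lemma map_of_lipschitz_bound (hΦ : LipContinuousAt Φ ω₀) (hmem : ∀ ω, Φ ω ∈ C01B E)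
    (Q : (↥(UBall E) → ℝ) →ₗ[ℝ] (↥(UBall E) → ℝ)) (K : NNReal)
    (hQ : ∀ g ∈ C01B E, ∀ L : NNReal, LipschitzWith L g → LipschitzWith (K * L) (Q g)) :
    LipContinuousAt (fun ω => Q (Φ ω)) ω₀ := by
  intro ε hε
  obtain ⟨δ, hδ, hlip⟩ := hΦ (ε / (K + 1)) (by positivity)
  refine ⟨δ, hδ, fun ω hω => ?_⟩
  have hconst : K * (ε / (K + 1)).toNNReal ≤ ε.toNNReal := by
    rw [Real.le_toNNReal_iff_coe_le hε.le, NNReal.coe_mul, Real.coe_toNNReal _ (by positivity)]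
    calc (K : ℝ) * (ε / (K + 1)) ≤ (K + 1) * (ε / (K + 1)) := by
          gcongr
          exact le_add_of_nonneg_right zero_le_one
      _ = ε := mul_div_cancel₀ _ (by positivity)
  have hdiff := (hQ (Φ ω - Φ ω₀) (sub_mem_C01B (hmem ω) (hmem ω₀)) _ (hlip ω hω)).weaken hconst
  rwa [map_sub] at hdiff

/-- `Φ ω ∘ ω⁻¹ - Φ ω₀ ∘ ω₀⁻¹ = (Φ ω - Φ ω₀) ∘ ω⁻¹ + (Φ ω₀ ∘ ω⁻¹ - Φ ω₀ ∘ ω₀⁻¹)`, where composing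
with `ω⁻¹` preserves the Lipschitz norm of the first summand. -/
lemma compIso_symm (hΦ : LipContinuousAt Φ ω₀)
    (hω₀ : LipContinuousAt (fun ω => compIso ω.symm (Φ ω₀)) ω₀) :
    LipContinuousAt (fun ω => compIso ω.symm (Φ ω)) ω₀ := by
  intro ε hε
  obtain ⟨δ₁, hδ₁, hlip₁⟩ := hΦ (ε / 2) (half_pos hε)
  obtain ⟨δ₂, hδ₂, hlip₂⟩ := hω₀ (ε / 2) (half_pos hε)
  refine ⟨min δ₁ δ₂, lt_min hδ₁ hδ₂, fun ω hω => ?_⟩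
  have hmoved := lipschitzWith_compIso ω.symm
    (hlip₁ ω fun x => (hω x).trans (by gcongr; exact min_le_left _ _))
  have hfixed := hlip₂ ω fun x => (hω x).trans (by gcongr; exact min_le_right _ _)
  have hsum := hmoved.add hfixed
  rw [← Real.toNNReal_add (half_pos hε).le (half_pos hε).le, add_halves] at hsum
  simpa only [compIso, sub_add_sub_cancel] using hsum

end LipContinuousAt

theorem statement11_general {f : ↥(UBall E) → ℝ} (hf : f ∈ C01B E) :
    (∀ ω₀ : E ≃ₗᵢ[ℝ] E, LipContinuousAt (fun ω => compIso ω f) ω₀) ∧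
    ∀ (Q : (↥(UBall E) → ℝ) →ₗ[ℝ] (↥(UBall E) → ℝ)) (K : NNReal),
      (∀ g ∈ C01B E, Q g ∈ C01B E) →
      (∀ g ∈ C01B E, ∀ L : NNReal, LipschitzWith L g → LipschitzWith (K * L) (Q g)) →
      ∀ ω₀ : E ≃ₗᵢ[ℝ] E, LipContinuousAt (fun ω => compIso ω.symm (Q (compIso ω f))) ω₀ := by
  refine ⟨lipContinuousAt_compIso hf, fun Q K hQ hK ω₀ => ?_⟩
  have horbit : LipContinuousAt (fun ω => Q (compIso ω f)) ω₀ :=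
    (lipContinuousAt_compIso hf ω₀).map_of_lipschitz_bound (fun ω => compIso_mem_C01B ω hf) Q K hK
  have himage : Q (compIso ω₀ f) ∈ C01B E := hQ _ (compIso_mem_C01B ω₀ hf)
  exact horbit.compIso_symm (lipContinuousAt_compIso himage ω₀.symm).comp_symm

end IsometryGroup

/-- **Fact 2.2.** For every `f ∈ C₀¹(B_E)`, the map `O_n → C₀¹(B_E)`, `ω ↦ f∘ω`, is
continuous with respect to the operator-norm topology on the orthogonal group and the
Lipschitz norm on `C₀¹(B_E)`. Consequently, for every linear operator `Q` on the
functions on `B_E` that maps `C₀¹(B_E)` into itself with Lipschitz-norm bound `K`, the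
map `ω ↦ Q(f∘ω)∘ω⁻¹` is continuous as well. -/
theorem statement11 (n : ℕ)
    (f : ↥(UBall (EuclideanSpace ℝ (Fin n))) → ℝ)
    (hf : f ∈ C01B (EuclideanSpace ℝ (Fin n))) :
    (∀ (ω₀ : EuclideanSpace ℝ (Fin n) ≃ₗᵢ[ℝ] EuclideanSpace ℝ (Fin n)) (ε : ℝ), 0 < ε →
      ∃ δ > (0 : ℝ), ∀ ω : EuclideanSpace ℝ (Fin n) ≃ₗᵢ[ℝ] EuclideanSpace ℝ (Fin n),
        (∀ x : EuclideanSpace ℝ (Fin n), ‖ω x - ω₀ x‖ ≤ δ * ‖x‖) →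
        LipschitzWith (Real.toNNReal ε) (fun x => compIso ω f x - compIso ω₀ f x)) ∧
    (∀ (Q : (↥(UBall (EuclideanSpace ℝ (Fin n))) → ℝ) →ₗ[ℝ]
            (↥(UBall (EuclideanSpace ℝ (Fin n))) → ℝ)) (K : NNReal),
      (∀ g ∈ C01B (EuclideanSpace ℝ (Fin n)), Q g ∈ C01B (EuclideanSpace ℝ (Fin n))) →
      (∀ g ∈ C01B (EuclideanSpace ℝ (Fin n)), ∀ L : NNReal,
        LipschitzWith L g → LipschitzWith (K * L) (Q g)) →
      ∀ (ω₀ : EuclideanSpace ℝ (Fin n) ≃ₗᵢ[ℝ] EuclideanSpace ℝ (Fin n)) (ε : ℝ), 0 < ε →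
        ∃ δ > (0 : ℝ), ∀ ω : EuclideanSpace ℝ (Fin n) ≃ₗᵢ[ℝ] EuclideanSpace ℝ (Fin n),
          (∀ x : EuclideanSpace ℝ (Fin n), ‖ω x - ω₀ x‖ ≤ δ * ‖x‖) →
          LipschitzWith (Real.toNNReal ε)
            (fun x => compIso ω.symm (Q (compIso ω f)) x
                      - compIso ω₀.symm (Q (compIso ω₀ f)) x)) := by
  exact statement11_general hf
end
end

section
/- For every finite-dimensional Banach space F (of dimension ≥ 1), the subspace C₀¹(B_F) is not complemented in Lip₀(B_F): there is no bounded linear projection from Lip₀(B_F) onto C₀¹(B_F). In particular, C₀¹([−1,1]) is not complemented in Lip₀([−1,1]). -/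
open Metric Set Real

noncomputable section

/-! The proof is Whitley's argument for the non-complementability of `c₀` in `ℓ^∞`. Since `ℝ` is a
contractive retract of `F`, a projection for `F` induces one for `ℝ`. A bounded sequence
`c : ℤ → ℝ` is sent to the primitive of the function `c ⌊t⁻¹⌋ * sin (2π / t)`; this embeds `ℓ^∞`
into `Lip₀([-1, 1])`, and the image of `c` lies in `C₀¹([-1, 1])` exactly when `c ∈ c₀`. Countably
many point evaluations decide whether the projection fixes a Lipschitz function. However, countably
many bounded functionals on `ℓ^∞` that vanish on finitely supported sequences have a common zero
among the indicators of any uncountable almost disjoint family of infinite sets, while such an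
indicator is not in `c₀`. -/

open Filter Topology BoundedContinuousFunction MeasureTheory

section AlmostDisjoint

theorem finite_setOf_floor_nat_mul_eq {x y : ℝ} (hxy : x ≠ y) :
    {n : ℕ | ⌊n * x⌋ = ⌊n * y⌋}.Finite := by
  have hpos : 0 < |x - y| := abs_pos.2 (sub_ne_zero.2 hxy)
  refine (finite_Iic ⌊|x - y|⁻¹⌋₊).subset fun n hn => Nat.le_floor ?_
  have hlt : |(n : ℝ) * x - n * y| < 1 := Int.abs_sub_lt_one_of_floor_eq_floor hn
  rw [← mul_sub, abs_mul, Nat.abs_cast] at hlt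
  exact (lt_inv_mul_iff₀' hpos).2 hlt |>.le.trans_eq (mul_one _)

theorem exists_almostDisjoint_real (α : Type*) [Infinite α] :
    ∃ A : ℝ → Set α, (∀ x, (A x).Infinite) ∧ Pairwise fun x y => (A x ∩ A y).Finite := by
  let e : ℕ × ℤ ↪ α := (Denumerable.eqv (ℕ × ℤ)).toEmbedding.trans (Infinite.natEmbedding α)
  -- The integer points just below two lines of distinct slopes `x` and `y` eventually separate.
  refine ⟨fun x => range fun n : ℕ => e (n, ⌊n * x⌋), fun x => ?_, fun x y hxy => ?_⟩
  · exact infinite_range_of_injective fun m n h => (Prod.ext_iff.1 (e.injective h)).1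
  · refine ((finite_setOf_floor_nat_mul_eq hxy).image fun n : ℕ => e (n, ⌊n * x⌋)).subset ?_
    rintro _ ⟨⟨m, rfl⟩, n, hn⟩
    obtain ⟨rfl, hfloor⟩ := Prod.ext_iff.1 (e.injective hn)
    exact mem_image_of_mem _ hfloor.symm

end AlmostDisjoint

section Whitley

variable {α : Type*} [TopologicalSpace α] [DiscreteTopology α]

/-- The indicator function of `A` as an element of `ℓ^∞(α)`, which is encoded as the bounded
continuous functions on the discrete space `α`. -/
def linftyIndicator (A : Set α) : α →ᵇ ℝ :=
  indicator A (isClopen_discrete A)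

theorem linftyIndicator_apply (A : Set α) (a : α) : linftyIndicator A a = A.indicator 1 a :=
  rfl

theorem sum_abs_apply_linftyIndicator_le_of_pairwiseDisjoint {ι : Type*}
    (Λ : (α →ᵇ ℝ) →L[ℝ] ℝ) {s : Finset ι} {B : ι → Set α}
    (hB : (s : Set ι).PairwiseDisjoint B) :
    ∑ x ∈ s, |Λ (linftyIndicator (B x))| ≤ ‖Λ‖ := by
  let ε : ι → ℝ := fun x => SignType.sign (Λ (linftyIndicator (B x)))
  have hε (x : ι) : |ε x| ≤ 1 := by
    simp only [ε]
    cases SignType.sign (Λ (linftyIndicator (B x))) <;> simp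
  let c : α →ᵇ ℝ := ∑ x ∈ s, ε x • linftyIndicator (B x)
  have hc : ‖c‖ ≤ 1 := by
    refine (norm_le zero_le_one).2 fun a => ?_
    have hca : c a = ∑ x ∈ s, ε x * (B x).indicator 1 a := by
      simp [c, linftyIndicator_apply]
    rw [hca, Real.norm_eq_abs]
    by_cases ha : ∃ x ∈ s, a ∈ B x
    · obtain ⟨x, hxs, hax⟩ := ha
      rw [Finset.sum_eq_single_of_mem x hxs fun y hys hyx => ?_]
      · simpa [hax] using hε x
      · simp [disjoint_right.1 (hB hys hxs hyx) hax]
    · push Not at ha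
      rw [Finset.sum_eq_zero fun x hxs => by simp [ha x hxs]]
      simp
  calc ∑ x ∈ s, |Λ (linftyIndicator (B x))| = Λ c := by
        simp [c, ε, map_sum, sign_mul_self]
    _ ≤ ‖Λ c‖ := le_abs_self _
    _ ≤ ‖Λ‖ := Λ.unit_le_opNorm c hc

theorem apply_linftyIndicator_diff {Λ : (α →ᵇ ℝ) →L[ℝ] ℝ}
    (hΛ : ∀ c : α →ᵇ ℝ, (Function.support c).Finite → Λ c = 0) {A E : Set α}
    (hAE : (A ∩ E).Finite) :
    Λ (linftyIndicator (A \ E)) = Λ (linftyIndicator A) := by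
  rw [← sub_eq_zero, ← map_sub]
  refine hΛ _ (hAE.subset fun a ha => ?_)
  by_contra hnot
  refine ha ?_
  by_cases haA : a ∈ A <;> by_cases haE : a ∈ E <;> simp_all [linftyIndicator_apply]

theorem countable_setOf_apply_linftyIndicator_ne_zero {Λ : (α →ᵇ ℝ) →L[ℝ] ℝ}
    (hΛ : ∀ c : α →ᵇ ℝ, (Function.support c).Finite → Λ c = 0) {ι : Type*} {A : ι → Set α}
    (hA : Pairwise fun x y => (A x ∩ A y).Finite) :
    {x | Λ (linftyIndicator (A x)) ≠ 0}.Countable := by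
  classical
  have hsum (s : Finset ι) : ∑ x ∈ s, |Λ (linftyIndicator (A x))| ≤ ‖Λ‖ := by
    let E : ι → Set α := fun x => ⋃ y ∈ s.erase x, A y
    have hE (x : ι) : (A x ∩ E x).Finite := by
      rw [inter_iUnion₂]
      exact (s.erase x).finite_toSet.biUnion fun y hy => hA (Finset.ne_of_mem_erase hy).symm
    have hdisj : (s : Set ι).PairwiseDisjoint fun x => A x \ E x := fun x hx y _ hxy =>
      disjoint_left.2 fun a hax hay =>
        hay.2 (mem_biUnion (Finset.mem_erase.2 ⟨hxy, hx⟩) hax.1)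
    simpa only [apply_linftyIndicator_diff hΛ (hE _)] using
      sum_abs_apply_linftyIndicator_le_of_pairwiseDisjoint Λ hdisj
  exact (summable_of_sum_le (fun _ => abs_nonneg _) hsum).countable_support.mono
    fun x hx => abs_ne_zero.2 hx

theorem exists_infinite_forall_apply_linftyIndicator_eq_zero [Infinite α] {ι : Type*} [Countable ι]
    {Λ : ι → (α →ᵇ ℝ) →L[ℝ] ℝ}
    (hΛ : ∀ i (c : α →ᵇ ℝ), (Function.support c).Finite → Λ i c = 0) :
    ∃ A : Set α, A.Infinite ∧ ∀ i, Λ i (linftyIndicator A) = 0 := by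
  obtain ⟨A, hAinf, hA⟩ := exists_almostDisjoint_real α
  have hcount : (⋃ i, {x | Λ i (linftyIndicator (A x)) ≠ 0}).Countable :=
    countable_iUnion fun i => countable_setOf_apply_linftyIndicator_ne_zero (hΛ i) hA
  obtain ⟨x, hx⟩ : ∃ x, x ∉ ⋃ i, {x | Λ i (linftyIndicator (A x)) ≠ 0} :=
    (ne_univ_iff_exists_notMem _).1 fun h => not_countable_univ (h ▸ hcount)
  exact ⟨A x, hAinf x, by simpa using hx⟩

end Whitley

section Chirp

/-- The chirp `sin (2π / t)` whose amplitude on `{t | n ≤ t⁻¹ < n + 1}` is `c n`. It encodes the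
behaviour of `c` at infinity in the behaviour of a function near `0`. -/
def chirp (c : ℤ → ℝ) (t : ℝ) : ℝ :=
  c ⌊t⁻¹⌋ * sin (2 * π * t⁻¹)

theorem chirp_zero (c : ℤ → ℝ) : chirp c 0 = 0 := by
  simp [chirp]

theorem abs_chirp_le (c : ℤ → ℝ) (t : ℝ) : |chirp c t| ≤ |c ⌊t⁻¹⌋| := by
  rw [chirp, abs_mul]
  exact mul_le_of_le_one_right (abs_nonneg _) (abs_sin_le_one _)

theorem measurable_chirp (c : ℤ → ℝ) : Measurable (chirp c) := by
  have hc : Measurable c := measurable_of_countable c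
  unfold chirp
  fun_prop

theorem chirp_inv_intCast_add (c : ℤ → ℝ) (n : ℤ) {a : ℝ} (ha : a ∈ Ico 0 1) :
    chirp c (n + a)⁻¹ = c n * sin (2 * π * a) := by
  have hfloor : ⌊n + a⌋ = n := by rw [Int.floor_intCast_add, Int.floor_eq_zero_iff.2 ha, add_zero]
  have hsin : 2 * π * (n + a) = 2 * π * a + n * (2 * π) := by ring
  rw [chirp, inv_inv, hfloor, hsin, sin_add_int_mul_two_pi]

theorem continuous_floor_mul (c : ℤ → ℝ) {s : ℝ → ℝ} (hs : Continuous s)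
    (hs_int : ∀ n : ℤ, s n = 0) : Continuous fun u => c ⌊u⌋ * s u := by
  refine continuous_iff_continuousAt.2 fun u => continuousAt_iff_continuous_left'_right'.2 ⟨?_, ?_⟩
  · have heq : c (⌈u⌉ - 1) * s u = c ⌊u⌋ * s u := by
      by_cases hu : u ∈ range ((↑) : ℤ → ℝ)
      · obtain ⟨n, rfl⟩ := hu
        simp only [hs_int, mul_zero]
      · rw [Int.ceil_eq_floor_add_one_iff_notMem u |>.2 hu, add_sub_cancel_right]
    have hc : Tendsto (fun v => c ⌊v⌋) (𝓝[<] u) (𝓝 (c (⌈u⌉ - 1))) :=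
      ((tendsto_pure_pure c _).comp (tendsto_floor_left_pure_ceil_sub_one u)).mono_right
        (pure_le_nhds _)
    simpa only [ContinuousWithinAt, heq] using hc.mul (hs.tendsto u |>.mono_left inf_le_left)
  · have hc : Tendsto (fun v => c ⌊v⌋) (𝓝[>] u) (𝓝 (c ⌊u⌋)) :=
      ((tendsto_pure_pure c _).comp (tendsto_floor_right_pure_floor u)).mono_left
        (nhdsWithin_mono u Ioi_subset_Ici_self) |>.mono_right (pure_le_nhds _)
    exact hc.mul (hs.tendsto u |>.mono_left inf_le_left)

theorem continuousAt_chirp (c : ℤ → ℝ) {t : ℝ} (ht : t ≠ 0) :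
    ContinuousAt (chirp c) t := by
  have hwave : Continuous fun u : ℝ => c ⌊u⌋ * sin (2 * π * u) :=
    continuous_floor_mul c (by fun_prop) fun n => by
      simpa [mul_comm] using sin_add_int_mul_two_pi 0 n
  exact hwave.continuousAt.comp (f := Inv.inv) (continuousAt_inv₀ ht)

theorem tendsto_floor_inv_nhdsNE_zero : Tendsto (fun t : ℝ => ⌊t⁻¹⌋) (𝓝[≠] 0) cofinite := by
  have hfloor : Tendsto (Int.floor : ℝ → ℤ) (Bornology.cobounded ℝ) cofinite := by
    rw [IsOrderBornology.cobounded_eq, Int.cofinite_eq]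
    exact tendsto_floor_atBot.sup_sup tendsto_floor_atTop
  exact hfloor.comp tendsto_inv₀_nhdsNE_zero

theorem tendsto_inv_intCast_add_cofinite (a : ℝ) :
    Tendsto (fun n : ℤ => ((n : ℝ) + a)⁻¹) cofinite (𝓝[≠] 0) := by
  have hcast : Tendsto ((↑) : ℤ → ℝ) cofinite (Bornology.cobounded ℝ) := by
    rw [Metric.cobounded_eq_cocompact]
    exact Int.tendsto_coe_cofinite
  exact tendsto_inv₀_cobounded'.comp ((tendsto_add_const_cobounded a).comp hcast)

theorem continuous_chirp {c : ℤ → ℝ} (hc : Tendsto c cofinite (𝓝 0)) :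
    Continuous (chirp c) := by
  refine continuous_iff_continuousAt.2 fun t => ?_
  obtain rfl | ht := eq_or_ne t 0
  · refine continuousAt_iff_punctured_nhds.2 ?_
    rw [chirp_zero]
    exact squeeze_zero_norm (abs_chirp_le c)
      (by simpa using (hc.comp tendsto_floor_inv_nhdsNE_zero).abs)
  · exact continuousAt_chirp c ht

theorem tendsto_cofinite_zero_of_chirp_tendsto {c : ℤ → ℝ} {l : ℝ}
    (h : Tendsto (chirp c) (𝓝[≠] 0) (𝓝 l)) : Tendsto c cofinite (𝓝 0) := by
  have hphase {a : ℝ} (ha : a ∈ Ico 0 1) :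
      Tendsto (fun n => c n * sin (2 * π * a)) cofinite (𝓝 l) := by
    simpa only [Function.comp_def, chirp_inv_intCast_add c _ ha] using
      h.comp (tendsto_inv_intCast_add_cofinite a)
  have hl : l = 0 := by
    have hzeros := hphase (a := 0) (by simp)
    simp only [mul_zero, sin_zero] at hzeros
    exact tendsto_nhds_unique hzeros tendsto_const_nhds
  have hcrests := hphase (a := 1 / 4) (by norm_num)
  rw [show 2 * π * (1 / 4) = π / 2 by ring, sin_pi_div_two] at hcrests
  simpa only [mul_one, hl] using hcrests

end Chirp

section Primitive

theorem primitive_mem_C01B {h : ℝ → ℝ} (hh : Continuous h) :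
    (fun x : UBall ℝ => ∫ s in (0 : ℝ)..x, h s) ∈ C01B ℝ := by
  have hderiv (t : ℝ) : HasDerivAt (fun t => ∫ s in (0 : ℝ)..t, h s) (h t) t :=
    (hh.integral_hasStrictDerivAt 0 t).hasDerivAt
  refine ⟨fun t => ∫ s in (0 : ℝ)..t, h s, fun _ => rfl,
    fun t _ => (hderiv t).continuousAt.continuousWithinAt, intervalIntegral.integral_same,
    fun t => .toSpanSingleton ℝ (h t), fun t _ => (hderiv t).hasFDerivAt, ?_⟩
  have hcont : Continuous fun t => ContinuousLinearMap.toSpanSingleton ℝ (h t) :=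
    (ContinuousLinearMap.toSpanSingletonLIE ℝ ℝ).continuous.comp hh
  exact ((isCompact_closedBall (0 : ℝ) 1).uniformContinuousOn_of_continuous
    hcont.continuousOn).mono ball_subset_closedBall

theorem exists_continuousOn_eq_of_primitive_mem_C01B {h : ℝ → ℝ}
    (hh : StronglyMeasurable h) (hh_int : ∀ a b, IntervalIntegrable h volume a b)
    (hC : (fun x : UBall ℝ => ∫ s in (0 : ℝ)..x, h s) ∈ C01B ℝ) :
    ∃ D : ℝ → ℝ, ContinuousOn D (ball 0 1) ∧ ∀ t ∈ ball 0 1, ContinuousAt h t → h t = D t := by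
  obtain ⟨g, hg, -, -, g', hg', hu⟩ := hC
  refine ⟨fun t => g' t 1, hu.continuousOn.clm_apply continuousOn_const, fun t ht hcont => ?_⟩
  have hprim : HasDerivAt (fun t => ∫ s in (0 : ℝ)..t, h s) (h t) t :=
    intervalIntegral.integral_hasDerivAt_right (hh_int 0 t) hh.stronglyMeasurableAtFilter hcont
  refine hprim.unique ((hg' t ht).hasDerivAt.congr_of_eventuallyEq ?_)
  filter_upwards [isOpen_ball.mem_nhds ht] with s hs using hg ⟨s, ball_subset_closedBall hs⟩

theorem intervalIntegrable_chirp (c : ℤ →ᵇ ℝ) (a b : ℝ) :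
    IntervalIntegrable (chirp c) volume a b := by
  refine (intervalIntegrable_const (c := ‖c‖)).mono_fun'
    (measurable_chirp c).aestronglyMeasurable (Eventually.of_forall fun t => ?_)
  exact (abs_chirp_le c t).trans (c.norm_coe_le_norm _)

/-- The embedding of `ℓ^∞(ℤ)` into `Lip₀([-1, 1])` which sends `c` to the primitive of
`chirp c`. -/
def chirpPrimitive : (ℤ →ᵇ ℝ) →ₗ[ℝ] (UBall ℝ → ℝ) where
  toFun c x := ∫ s in (0 : ℝ)..x, chirp c s
  map_add' c d := by
    ext x
    rw [Pi.add_apply, ← intervalIntegral.integral_add (intervalIntegrable_chirp c _ _)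
      (intervalIntegrable_chirp d _ _)]
    simp only [chirp, BoundedContinuousFunction.coe_add, Pi.add_apply, add_mul]
  map_smul' r c := by
    ext x
    simp only [chirp, BoundedContinuousFunction.coe_smul, smul_eq_mul, mul_assoc,
      intervalIntegral.integral_const_mul, Pi.smul_apply, RingHom.id_apply]

theorem lipschitzWith_chirpPrimitive (c : ℤ →ᵇ ℝ) :
    LipschitzWith ‖c‖₊ (chirpPrimitive c) := by
  refine LipschitzWith.of_dist_le_mul fun x y => ?_
  have hsub : chirpPrimitive c x - chirpPrimitive c y =
      ∫ s in (y : ℝ)..x, chirp c s :=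
    intervalIntegral.integral_interval_sub_left (intervalIntegrable_chirp c _ _)
      (intervalIntegrable_chirp c _ _)
  rw [dist_eq_norm, hsub, coe_nnnorm, Subtype.dist_eq, Real.dist_eq]
  exact intervalIntegral.norm_integral_le_of_norm_le_const fun t _ =>
    (abs_chirp_le c t).trans (c.norm_coe_le_norm _)

theorem chirpPrimitive_mem_Lip0B (c : ℤ →ᵇ ℝ) : chirpPrimitive c ∈ Lip0B ℝ :=
  ⟨⟨_, lipschitzWith_chirpPrimitive c⟩, intervalIntegral.integral_same⟩

theorem chirpPrimitive_mem_C01B_iff {c : ℤ →ᵇ ℝ} :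
    chirpPrimitive c ∈ C01B ℝ ↔ Tendsto c cofinite (𝓝 0) := by
  refine ⟨fun hC => ?_, fun hc => primitive_mem_C01B (continuous_chirp hc)⟩
  obtain ⟨D, hD, hDeq⟩ := exists_continuousOn_eq_of_primitive_mem_C01B
    (measurable_chirp c).stronglyMeasurable (intervalIntegrable_chirp c) hC
  have hball : ball (0 : ℝ) 1 ∈ 𝓝 0 := ball_mem_nhds 0 one_pos
  refine tendsto_cofinite_zero_of_chirp_tendsto (l := D 0) <|
    ((hD.continuousAt hball).mono_left nhdsWithin_le_nhds).congr' ?_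
  filter_upwards [self_mem_nhdsWithin, nhdsWithin_le_nhds hball] with t ht0 ht
  exact (hDeq t ht (continuousAt_chirp c ht0)).symm

end Primitive

section Ball

theorem abs_apply_le_of_lipschitzWith {E : Type*} [NormedAddCommGroup E] {f : UBall E → ℝ}
    {L : NNReal} (hf : LipschitzWith L f) (h0 : f (zeroB E) = 0) (x : UBall E) : |f x| ≤ L := by
  have hdist : dist x (zeroB E) ≤ 1 := x.2
  have hle := hf.dist_le_mul x (zeroB E)
  rw [h0, dist_zero_right, Real.norm_eq_abs] at hle
  exact hle.trans (mul_le_of_le_one_right L.2 hdist)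

variable {E F : Type*} [NormedAddCommGroup E] [NormedSpace ℝ E]
  [NormedAddCommGroup F] [NormedSpace ℝ F]

theorem apply_zeroB_of_mem_C01B {f : UBall E → ℝ} (hf : f ∈ C01B E) : f (zeroB E) = 0 := by
  obtain ⟨g, hg, -, hg0, -⟩ := hf
  exact (hg _).trans hg0

/-- The map of unit balls induced by a linear contraction. -/
def unitBallMap (T : E →L[ℝ] F) (hT : ‖T‖ ≤ 1) : UBall E → UBall F :=
  MapsTo.restrict T _ _ fun x (hx : x ∈ closedBall 0 1) => by
    rw [mem_closedBall_zero_iff] at hx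
    exact mem_closedBall_zero_iff.2 ((T.le_of_opNorm_le_of_le hT hx).trans_eq (one_mul 1))

variable {T : E →L[ℝ] F} (hT : ‖T‖ ≤ 1)
include hT

theorem mapsTo_ball_of_opNorm_le_one_s13 : MapsTo T (ball 0 1) (ball 0 1) := fun x hx => by
  rw [mem_ball_zero_iff] at hx ⊢
  exact (T.le_of_opNorm_le hT x).trans_lt (by rwa [one_mul])

theorem lipschitzWith_unitBallMap : LipschitzWith 1 (unitBallMap T hT) :=
  LipschitzWith.of_dist_le_mul fun x y =>
    (T.lipschitzWith_of_opNorm_le (K := 1) (by simpa using hT)).dist_le_mul (x : E) y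

theorem lipschitzWith_comp_unitBallMap {f : UBall F → ℝ} {L : NNReal} (hf : LipschitzWith L f) :
    LipschitzWith L (f ∘ unitBallMap T hT) := by
  simpa only [mul_one] using hf.comp (lipschitzWith_unitBallMap hT)

theorem comp_unitBallMap_mem_Lip0B {f : UBall F → ℝ} (hf : f ∈ Lip0B F) :
    f ∘ unitBallMap T hT ∈ Lip0B E := by
  obtain ⟨⟨L, hL⟩, hf0⟩ := hf
  have hzero : unitBallMap T hT (zeroB E) = zeroB F := Subtype.ext (map_zero T)
  exact ⟨⟨L, lipschitzWith_comp_unitBallMap hT hL⟩, by rw [Function.comp_apply, hzero, hf0]⟩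

theorem comp_unitBallMap_mem_C01B {f : UBall F → ℝ} (hf : f ∈ C01B F) :
    f ∘ unitBallMap T hT ∈ C01B E := by
  obtain ⟨g, hg, hgcont, hg0, g', hg', hu⟩ := hf
  have hball := mapsTo_ball_of_opNorm_le_one_s13 hT
  refine ⟨g ∘ T, fun x => hg (unitBallMap T hT x), ?_, by simp [hg0], fun x => g' (T x) ∘L T,
    fun x hx => (hg' _ (hball hx)).comp x T.hasFDerivAt, ?_⟩
  · exact hgcont.comp T.continuous.continuousOn fun x hx => (unitBallMap T hT ⟨x, hx⟩).2
  · exact ((ContinuousLinearMap.compL ℝ E F ℝ).flip T).uniformContinuous.comp_uniformContinuousOn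
      (hu.comp T.uniformContinuous.uniformContinuousOn hball)

end Ball

section Projection

variable {E F : Type*} [NormedAddCommGroup E] [NormedSpace ℝ E]
  [NormedAddCommGroup F] [NormedSpace ℝ F]

/-- `Q` restricts to a projection of `Lip₀(B_E)` onto `C₀¹(B_E)` with norm at most `K`. The values
of `Q` outside `Lip₀(B_E)` are irrelevant. -/
structure IsC01Projection (Q : (UBall E → ℝ) →ₗ[ℝ] (UBall E → ℝ)) (K : NNReal) : Prop where
  mem_C01B : ∀ f ∈ Lip0B E, Q f ∈ C01B E
  apply_eq_self : ∀ f ∈ C01B E, Q f = f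
  lipschitzWith : ∀ f ∈ Lip0B E, ∀ L : NNReal, LipschitzWith L f → LipschitzWith (K * L) (Q f)

namespace IsC01Projection

theorem retract {Q : (UBall F → ℝ) →ₗ[ℝ] (UBall F → ℝ)} {K : NNReal} (hQ : IsC01Projection Q K)
    {T : E →L[ℝ] F} {S : F →L[ℝ] E} (hT : ‖T‖ ≤ 1) (hS : ‖S‖ ≤ 1)
    (hST : Function.LeftInverse S T) :
    IsC01Projection (LinearMap.funLeft ℝ ℝ (unitBallMap T hT) ∘ₗ Q ∘ₗ
      LinearMap.funLeft ℝ ℝ (unitBallMap S hS)) K where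
  mem_C01B f hf := comp_unitBallMap_mem_C01B hT (hQ.mem_C01B _ (comp_unitBallMap_mem_Lip0B hS hf))
  apply_eq_self f hf := by
    have hinv (x : UBall E) : unitBallMap S hS (unitBallMap T hT x) = x := Subtype.ext (hST x)
    have hfix := hQ.apply_eq_self _ (comp_unitBallMap_mem_C01B hS hf)
    ext x
    exact (congrFun hfix (unitBallMap T hT x)).trans (congrArg f (hinv x))
  lipschitzWith f hf L hL := lipschitzWith_comp_unitBallMap hT <|
    hQ.lipschitzWith _ (comp_unitBallMap_mem_Lip0B hS hf) L (lipschitzWith_comp_unitBallMap hS hL)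

variable {Q : (UBall ℝ → ℝ) →ₗ[ℝ] (UBall ℝ → ℝ)} {K : NNReal} (hQ : IsC01Projection Q K)
include hQ

theorem lipschitzWith_apply_chirpPrimitive (c : ℤ →ᵇ ℝ) :
    LipschitzWith (K * ‖c‖₊) (Q (chirpPrimitive c)) :=
  hQ.lipschitzWith _ (chirpPrimitive_mem_Lip0B c) _ (lipschitzWith_chirpPrimitive c)

theorem abs_chirpPrimitive_sub_le (x : UBall ℝ) (c : ℤ →ᵇ ℝ) :
    |chirpPrimitive c x - Q (chirpPrimitive c) x| ≤ (1 + K) * ‖c‖ := by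
  have hmem := chirpPrimitive_mem_Lip0B c
  have hP : |chirpPrimitive c x| ≤ ‖c‖ :=
    abs_apply_le_of_lipschitzWith (lipschitzWith_chirpPrimitive c) hmem.2 x
  have hQP : |Q (chirpPrimitive c) x| ≤ K * ‖c‖ :=
    abs_apply_le_of_lipschitzWith (hQ.lipschitzWith_apply_chirpPrimitive c)
      (apply_zeroB_of_mem_C01B (hQ.mem_C01B _ hmem)) x
  linarith [abs_sub (chirpPrimitive c x) (Q (chirpPrimitive c) x)]

/-- The functional on `ℓ^∞(ℤ)` that measures, at the point `x`, by how much `Q` moves the image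
of a sequence in `Lip₀([-1, 1])`. -/
def defect (x : UBall ℝ) : (ℤ →ᵇ ℝ) →L[ℝ] ℝ :=
  (LinearMap.proj x ∘ₗ (LinearMap.id - Q) ∘ₗ chirpPrimitive).mkContinuous (1 + K)
    (hQ.abs_chirpPrimitive_sub_le x)

theorem defect_apply (x : UBall ℝ) (c : ℤ →ᵇ ℝ) :
    hQ.defect x c = chirpPrimitive c x - Q (chirpPrimitive c) x :=
  rfl

theorem defect_eq_zero_of_finite_support (x : UBall ℝ) (c : ℤ →ᵇ ℝ)
    (hc : (Function.support c).Finite) : hQ.defect x c = 0 := by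
  have hlim : Tendsto c cofinite (𝓝 0) :=
    tendsto_const_nhds.congr' (by
      filter_upwards [hc.eventually_cofinite_notMem] with n hn
      exact (Function.notMem_support.1 hn).symm)
  rw [defect_apply, hQ.apply_eq_self _ (chirpPrimitive_mem_C01B_iff.2 hlim), sub_self]

end IsC01Projection

theorem not_isC01Projection_real (Q : (UBall ℝ → ℝ) →ₗ[ℝ] (UBall ℝ → ℝ)) (K : NNReal) :
    ¬ IsC01Projection Q K := fun hQ => by
  have : Nonempty (UBall ℝ) := ⟨zeroB ℝ⟩
  obtain ⟨A, hA, hdefect⟩ := exists_infinite_forall_apply_linftyIndicator_eq_zero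
    (Λ := fun k => hQ.defect (TopologicalSpace.denseSeq (UBall ℝ) k))
    fun _ => hQ.defect_eq_zero_of_finite_support _
  set f := chirpPrimitive (linftyIndicator A)
  have hfix : f = Q f :=
    (TopologicalSpace.denseRange_denseSeq (UBall ℝ)).equalizer
      (lipschitzWith_chirpPrimitive _).continuous
      (hQ.lipschitzWith_apply_chirpPrimitive _).continuous
      (funext fun k => sub_eq_zero.1 (hdefect k))
  have hfC : f ∈ C01B ℝ := hfix ▸ hQ.mem_C01B f (chirpPrimitive_mem_Lip0B _)
  have hlt := (chirpPrimitive_mem_C01B_iff.1 hfC).eventually_lt_const one_pos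
  obtain ⟨n, hnA, hn⟩ := (hA.frequently_cofinite.and_eventually hlt).exists
  simp [linftyIndicator_apply, hnA] at hn

end Projection

theorem exists_contractive_retraction_real (F : Type*) [NormedAddCommGroup F] [NormedSpace ℝ F]
    [Nontrivial F] :
    ∃ (T : ℝ →L[ℝ] F) (S : F →L[ℝ] ℝ), ‖T‖ ≤ 1 ∧ ‖S‖ ≤ 1 ∧ Function.LeftInverse S T := by
  obtain ⟨e, he⟩ := exists_norm_eq F zero_le_one
  obtain ⟨S, hS, hSe⟩ := exists_dual_vector ℝ e (by simp [he])
  refine ⟨.toSpanSingleton ℝ e, S, ?_, hS.le, fun t => ?_⟩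
  · rw [ContinuousLinearMap.norm_toSpanSingleton, he]
  · simp [hSe, he]

theorem statement13_general (F : Type*) [NormedAddCommGroup F] [NormedSpace ℝ F] [Nontrivial F] :
    ¬ ∃ (Q : (↥(UBall F) → ℝ) →ₗ[ℝ] (↥(UBall F) → ℝ)) (K : NNReal),
      (∀ f ∈ Lip0B F, Q f ∈ C01B F) ∧ (∀ f ∈ C01B F, Q f = f) ∧
      (∀ f ∈ Lip0B F, ∀ L : NNReal, LipschitzWith L f → LipschitzWith (K * L) (Q f)) := by
  rintro ⟨Q, K, hmem, hfix, hlip⟩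
  obtain ⟨T, S, hT, hS, hST⟩ := exists_contractive_retraction_real F
  have hQ : IsC01Projection Q K := ⟨hmem, hfix, hlip⟩
  exact not_isC01Projection_real _ K (hQ.retract hT hS hST)

/-- **Non-complementability of `C₀¹` in `Lip₀`.** For every finite-dimensional Banach
space `F` of dimension at least `1`, the subspace `C₀¹(B_F)` is not complemented in
`Lip₀(B_F)`: there is no Lipschitz-norm-bounded linear projection from `Lip₀(B_F)` onto
`C₀¹(B_F)`. (In particular, `C₀¹([−1,1])` is not complemented in `Lip₀([−1,1])`, the
case `F = ℝ`.) -/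
theorem statement13 (F : Type*) [NormedAddCommGroup F] [NormedSpace ℝ F]
    [FiniteDimensional ℝ F] (hdim : 1 ≤ Module.finrank ℝ F) :
    ¬ ∃ (Q : (↥(UBall F) → ℝ) →ₗ[ℝ] (↥(UBall F) → ℝ)) (K : NNReal),
      (∀ f ∈ Lip0B F, Q f ∈ C01B F) ∧ (∀ f ∈ C01B F, Q f = f) ∧
      (∀ f ∈ Lip0B F, ∀ L : NNReal, LipschitzWith L f → LipschitzWith (K * L) (Q f)) := by
  have : Nontrivial F := Module.nontrivial_of_finrank_pos (R := ℝ) hdim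
  exact statement13_general F
end
end

section
/- Let n ≥ 3 be an integer, let d = ⌊n/√2⌋, and let α, β be real numbers. Then max{ 2|α(n−1) + β(n−1)(n−2)/2| , 2|α(d−1) + β(d−1)(d−2)/2| } ≥ (2/3)(√2 − 1)·|α|·(n − 2√2). -/
noncomputable section

/-!
Write `c t = α (t - 1) + β (t - 1) (t - 2) / 2`. Eliminating `β` between `c x` and `c y` gives
`α (x - 1) (y - 1) (x - y) = (x - 1) (x - 2) c y - (y - 1) (y - 2) c x`. When
`x / r - 1 ≤ y ≤ x / r` and `x ≥ 2 r`, the factor of `α` is at least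
`(r - 1) (x - 2 r) x (x - 1) / r ^ 2`, while the weights on the right add up to at most
`(1 + 1 / r ^ 2) x (x - 1)` in absolute value. Cancelling `x (x - 1)` bounds `α` by the larger of
`|c x|` and `|c y|`; for `x < 2 r` the bound is trivial. The constants of the claim are those of
`r = √2`.
-/

section OrderedRing

variable {R : Type*} [CommRing R] [LinearOrder R] [IsStrictOrderedRing R]

lemma abs_mul_sub_mul_le_mul_max_abs (a b u v : R) :
    |a * u - b * v| ≤ (|a| + |b|) * max |u| |v| := by
  calc |a * u - b * v| ≤ |a| * |u| + |b| * |v| := by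
        simpa only [abs_mul] using abs_sub (a * u) (b * v)
    _ ≤ |a| * max |u| |v| + |b| * max |u| |v| := by
        gcongr
        exacts [le_max_left _ _, le_max_right _ _]
    _ = (|a| + |b|) * max |u| |v| := by ring

lemma abs_sub_one_mul_sub_two_le {t : R} (ht : 1 ≤ t) :
    |(t - 1) * (t - 2)| ≤ t * (t - 1) := by
  have h_sub_two : |t - 2| ≤ t := abs_le.2 ⟨by linarith, by linarith⟩
  rw [abs_mul, abs_of_nonneg (sub_nonneg.2 ht), mul_comm t]
  exact mul_le_mul_of_nonneg_left h_sub_two (sub_nonneg.2 ht)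

lemma sq_mul_abs_sub_one_mul_sub_two_add_le {r x y : R} (hr : 1 ≤ r) (hy : 1 ≤ y)
    (hyx : r * y ≤ x) :
    r ^ 2 * (|(x - 1) * (x - 2)| + |(y - 1) * (y - 2)|) ≤ (r ^ 2 + 1) * (x * (x - 1)) := by
  have hx : 1 ≤ x := (one_le_mul_of_one_le_of_one_le hr hy).trans hyx
  have h_scaled : r ^ 2 * (y * (y - 1)) ≤ x * (x - 1) :=
    calc r ^ 2 * (y * (y - 1)) = (r * y) * (r * (y - 1)) := by ring
      _ ≤ x * (x - 1) :=
        mul_le_mul hyx (by linarith) (mul_nonneg (by linarith) (by linarith)) (by linarith)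
  calc r ^ 2 * (|(x - 1) * (x - 2)| + |(y - 1) * (y - 2)|)
      ≤ r ^ 2 * (x * (x - 1) + y * (y - 1)) := by
        gcongr
        exacts [abs_sub_one_mul_sub_two_le hx, abs_sub_one_mul_sub_two_le hy]
    _ ≤ (r ^ 2 + 1) * (x * (x - 1)) := by linarith

lemma sub_one_mul_sub_two_mul_mul_le {r x y : R} (hr : 1 ≤ r) (hx : 2 * r ≤ x)
    (hyx : r * y ≤ x) (hxy : x ≤ r * (y + 1)) :
    (r - 1) * (x - 2 * r) * x ≤ r ^ 2 * ((y - 1) * (x - y)) := by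
  have h_sub_one : x - 2 * r ≤ r * (y - 1) := by linarith
  have h_gap : (r - 1) * x ≤ r * (x - y) := by linarith
  calc (r - 1) * (x - 2 * r) * x = (x - 2 * r) * ((r - 1) * x) := by ring
    _ ≤ r * (y - 1) * (r * (x - y)) :=
      mul_le_mul h_sub_one h_gap (mul_nonneg (by linarith) (by linarith)) (by linarith)
    _ = r ^ 2 * ((y - 1) * (x - y)) := by ring

end OrderedRing

section PairSumCoeff

variable {K : Type*} [Field K]

/-- The coefficient of each `x i ^ 2` in the sum, over all pairs `i < j` among `t` coordinates, of
the forms `α * (x i ^ 2 + x j ^ 2) + β * ∑ k ∉ {i, j}, x k ^ 2`: a coordinate belongs to `t - 1`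
pairs and is missed by `(t - 1) * (t - 2) / 2`. As a polynomial in `t` it makes sense for every
scalar `t`. -/
def pairSumCoeff (α β t : K) : K :=
  α * (t - 1) + β * ((t - 1) * (t - 2) / 2)

lemma mul_pairSumCoeff_sub_mul_pairSumCoeff (α β x y : K) :
    (x - 1) * (x - 2) * pairSumCoeff α β y - (y - 1) * (y - 2) * pairSumCoeff α β x =
      α * ((x - 1) * ((y - 1) * (x - y))) := by
  unfold pairSumCoeff
  ring

variable [LinearOrder K] [IsStrictOrderedRing K]

lemma abs_mul_le_mul_max_abs_pairSumCoeff (α β x y : K) :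
    |α| * ((x - 1) * ((y - 1) * (x - y))) ≤
      (|(x - 1) * (x - 2)| + |(y - 1) * (y - 2)|) *
        max |pairSumCoeff α β x| |pairSumCoeff α β y| := by
  calc |α| * ((x - 1) * ((y - 1) * (x - y)))
      ≤ |α * ((x - 1) * ((y - 1) * (x - y)))| := by
        rw [abs_mul]
        gcongr
        exact le_abs_self _
    _ = |(x - 1) * (x - 2) * pairSumCoeff α β y - (y - 1) * (y - 2) * pairSumCoeff α β x| := by
        rw [mul_pairSumCoeff_sub_mul_pairSumCoeff]
    _ ≤ _ := by
        rw [max_comm]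
        exact abs_mul_sub_mul_le_mul_max_abs _ _ _ _

lemma sub_one_mul_abs_mul_le_max_abs_pairSumCoeff {r x y : K} (hr : 1 ≤ r) (hx : 2 * r ≤ x)
    (hyx : r * y ≤ x) (hxy : x ≤ r * (y + 1)) (α β : K) :
    (r - 1) * |α| * (x - 2 * r) ≤
      (r ^ 2 + 1) * max |pairSumCoeff α β x| |pairSumCoeff α β y| := by
  have hy : 1 ≤ y := le_of_mul_le_mul_left (a := r) (by linarith) (by linarith)
  have hx_one : 0 < x - 1 := by linarith
  refine le_of_mul_le_mul_right (a := x * (x - 1)) ?_ (mul_pos (by linarith) hx_one)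
  set M := max |pairSumCoeff α β x| |pairSumCoeff α β y|
  have hM : 0 ≤ M := le_max_of_le_left (abs_nonneg _)
  calc (r - 1) * |α| * (x - 2 * r) * (x * (x - 1))
      = |α| * (x - 1) * ((r - 1) * (x - 2 * r) * x) := by ring
    _ ≤ |α| * (x - 1) * (r ^ 2 * ((y - 1) * (x - y))) :=
        mul_le_mul_of_nonneg_left (sub_one_mul_sub_two_mul_mul_le hr hx hyx hxy) (by positivity)
    _ = r ^ 2 * (|α| * ((x - 1) * ((y - 1) * (x - y)))) := by ring
    _ ≤ r ^ 2 * ((|(x - 1) * (x - 2)| + |(y - 1) * (y - 2)|) * M) :=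
        mul_le_mul_of_nonneg_left (abs_mul_le_mul_max_abs_pairSumCoeff α β x y) (sq_nonneg r)
    _ = r ^ 2 * (|(x - 1) * (x - 2)| + |(y - 1) * (y - 2)|) * M := by ring
    _ ≤ (r ^ 2 + 1) * (x * (x - 1)) * M :=
        mul_le_mul_of_nonneg_right (sq_mul_abs_sub_one_mul_sub_two_add_le hr hy hyx) hM
    _ = (r ^ 2 + 1) * M * (x * (x - 1)) := by ring

theorem statement17_general {r x y : K} (hr : 1 ≤ r) (hyx : y ≤ x / r) (hxy : x / r ≤ y + 1)
    (α β : K) :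
    2 / (r ^ 2 + 1) * (r - 1) * |α| * (x - 2 * r) ≤
      max (2 * |pairSumCoeff α β x|) (2 * |pairSumCoeff α β y|) := by
  have hr_pos : 0 < r := zero_lt_one.trans_le hr
  have h_const : 0 ≤ 2 / (r ^ 2 + 1) * (r - 1) * |α| :=
    mul_nonneg (mul_nonneg (by positivity) (sub_nonneg.2 hr)) (abs_nonneg α)
  rcases le_total x (2 * r) with hx | hx
  · exact (mul_nonpos_of_nonneg_of_nonpos h_const (sub_nonpos.2 hx)).trans
      (le_max_of_le_left (by positivity))
  · have h_main := sub_one_mul_abs_mul_le_max_abs_pairSumCoeff hr hx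
      ((le_div_iff₀' hr_pos).1 hyx) ((div_le_iff₀' hr_pos).1 hxy) α β
    calc 2 / (r ^ 2 + 1) * (r - 1) * |α| * (x - 2 * r)
        = 2 * ((r - 1) * |α| * (x - 2 * r) / (r ^ 2 + 1)) := by ring
      _ ≤ 2 * max |pairSumCoeff α β x| |pairSumCoeff α β y| := by
          gcongr
          exact (div_le_iff₀' (by positivity)).2 h_main
      _ = max (2 * |pairSumCoeff α β x|) (2 * |pairSumCoeff α β y|) :=
          mul_max_of_nonneg _ _ zero_le_two

end PairSumCoeff

/-- **Claim 3.3 (Step 3 of the proof of Theorem A).** For `n ≥ 3`, `d = ⌊n/√2⌋` and any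
scalars `α, β`,
`max{2|α(n−1) + β(n−1)(n−2)/2|, 2|α(d−1) + β(d−1)(d−2)/2|} ≥ (2/3)(√2−1)|α|(n−2√2)`. -/
theorem statement17 (n : ℕ) (hn : 3 ≤ n) (d : ℕ)
    (hd : d = ⌊(n : ℝ) / Real.sqrt 2⌋₊) (α β : ℝ) :
    (2 / 3) * (Real.sqrt 2 - 1) * |α| * ((n : ℝ) - 2 * Real.sqrt 2) ≤
      max (2 * |α * ((n : ℝ) - 1) + β * (((n : ℝ) - 1) * ((n : ℝ) - 2) / 2)|)
          (2 * |α * ((d : ℝ) - 1) + β * (((d : ℝ) - 1) * ((d : ℝ) - 2) / 2)|) := by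
  have h_const : (2 : ℝ) / (√2 ^ 2 + 1) = 2 / 3 := by norm_num
  simpa only [h_const, pairSumCoeff, ← hd] using
    statement17_general (Real.one_le_sqrt.2 one_le_two)
      (Nat.floor_le (by positivity)) (Nat.lt_floor_add_one ((n : ℝ) / √2)).le α β
end
end
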